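/- arXiv:1508.04386 — 6 statements merged into one kernel-verified Lean document; each statement's English description precedes it below -/
import Mathlib

section
/- Let h : ℂ → ℝ be a non-negative smooth function such that ‖h‖_{C^k(ℂ)} < ∞ for every k = 0,1,2,…. Then the following are equivalent: (a) sup_{ζ∈ℂ} sup_{r∈[1,∞)} | ∫_{1≤|η|≤r} h(ζ+η)/η² dm(η) | < ∞; (b) there exist constants A₁, A₂, A₃, … such that for every ζ ∈ ℂ there exists a smooth function P : ℂ → ℝ with P(0) = 0 satisfying (i) ΔP(z) = h(ζ+z) for all z ∈ ℂ, (ii) |∇P(z)| ≤ A₁|z| for all z ∈ ℂ, and (iii) for each k = 2,3,…, every partial derivative of P of order k is bounded in absolute value by A_k on ℂ. -/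
open MeasureTheory Complex

/-- The Laplacian of a function `P : ℂ → ℝ`, as the sum of the two pure second
partial derivatives in the directions `1` and `I`. -/
noncomputable def laplacian (P : ℂ → ℝ) (z : ℂ) : ℝ :=
  iteratedFDeriv ℝ 2 P z ![1, 1] + iteratedFDeriv ℝ 2 P z ![Complex.I, Complex.I]

/-!
Write `q(z) = 1 / (1 + |z|²)` and start from the kernel `-log q - q`, a smoothing of `2 log |z|`.
Its Hessian is `4 q³` times the inner product minus twice the real part of a smooth kernel that
agrees with `1 / z²` up to an integrable error. The third derivatives of the kernel are integrable,
so subtracting Taylor polynomials of the kernel in the convolution with a bounded `h` makes it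
converge, and the resulting potential has Laplacian `8 (q³ * h)`. Its Hessian is bounded as soon
as the smoothed `1 / η²` convolutions are, which is what the bounds on the annulus integrals
provide. Averaging along dilations of `q³` gives an explicit function with all derivatives bounded
whose Laplacian is `(∫ q³) h - q³ * h`; adding a multiple of the potential above solves the
Poisson equation with right-hand side `h`. Translating the solution to `ζ` and subtracting its
first order Taylor polynomial gives the required `P`.

Conversely, `W = ∂P/∂x - i ∂P/∂y` satisfies `(∂/∂x + i ∂/∂y) (W / η) = ΔP / η`, so Green's formula
in the logarithmic coordinate `log η` expresses the annulus integral of `ΔP / η²` through the values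
of `W / η` on the two boundary circles, where it is at most `2 A₁`.
-/

set_option maxSynthPendingDepth 3

/-- The functions all of whose derivatives, including the function itself, exist and are bounded
(the space usually denoted `C_b^∞`). -/
def BoundedSmooth {E F : Type*} [NormedAddCommGroup E] [NormedSpace ℝ E] [NormedAddCommGroup F]
    [NormedSpace ℝ F] (f : E → F) : Prop :=
  ContDiff ℝ (⊤ : ℕ∞) f ∧ ∀ k : ℕ, ∃ C : ℝ, ∀ z, ‖iteratedFDeriv ℝ k f z‖ ≤ C

namespace BoundedSmooth

variable {E F G : Type*} [NormedAddCommGroup E] [NormedSpace ℝ E] [NormedAddCommGroup F]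
  [NormedSpace ℝ F] [NormedAddCommGroup G] [NormedSpace ℝ G] {f g : E → F}

protected lemma differentiable (hf : BoundedSmooth f) : Differentiable ℝ f :=
  hf.1.differentiable (by simp)

protected lemma continuous (hf : BoundedSmooth f) : Continuous f := hf.1.continuous

lemma exists_norm_le (hf : BoundedSmooth f) : ∃ C, ∀ z, ‖f z‖ ≤ C := by
  simpa using hf.2 0

lemma of_exists_norm_le (hf : ContDiff ℝ (⊤ : ℕ∞) f) (h0 : ∃ C, ∀ z, ‖f z‖ ≤ C)
    (h1 : BoundedSmooth (fderiv ℝ f)) : BoundedSmooth f := by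
  refine ⟨hf, fun k => ?_⟩
  rcases k with _ | k
  · simpa using h0
  · simpa only [← norm_iteratedFDeriv_fderiv] using h1.2 k

lemma of_hasFDerivAt {f' : E → E →L[ℝ] F} (h0 : ∃ C, ∀ z, ‖f z‖ ≤ C)
    (hf' : ∀ z, HasFDerivAt f (f' z) z) (h1 : BoundedSmooth f') : BoundedSmooth f := by
  obtain rfl : fderiv ℝ f = f' := funext fun z => (hf' z).fderiv
  exact of_exists_norm_le (contDiff_infty_iff_fderiv.2
    ⟨fun z => (hf' z).differentiableAt, h1.1⟩) h0 h1

protected lemma fderiv (hf : BoundedSmooth f) : BoundedSmooth (fderiv ℝ f) := by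
  refine ⟨hf.1.fderiv_right (by simp), fun k => ?_⟩
  simpa only [norm_iteratedFDeriv_fderiv] using hf.2 (k + 1)

protected lemma add (hf : BoundedSmooth f) (hg : BoundedSmooth g) : BoundedSmooth (f + g) := by
  refine ⟨hf.1.add hg.1, fun k => ?_⟩
  obtain ⟨C, hC⟩ := hf.2 k
  obtain ⟨D, hD⟩ := hg.2 k
  refine ⟨C + D, fun z => ?_⟩
  rw [iteratedFDeriv_add (hf.1.of_le (mod_cast le_top)) (hg.1.of_le (mod_cast le_top))]
  exact norm_add_le_of_le (hC z) (hD z)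

lemma clm_comp (L : F →L[ℝ] G) (hf : BoundedSmooth f) : BoundedSmooth fun z => L (f z) := by
  refine ⟨L.contDiff.comp hf.1, fun k => ?_⟩
  obtain ⟨C, hC⟩ := hf.2 k
  refine ⟨‖L‖ * C, fun z => ?_⟩
  exact (L.norm_iteratedFDeriv_comp_left hf.1.contDiffAt (mod_cast le_top)).trans
    (by gcongr; exact hC z)

protected lemma const_smul (c : ℝ) (hf : BoundedSmooth f) : BoundedSmooth (c • f) :=
  hf.clm_comp (c • ContinuousLinearMap.id ℝ F)

end BoundedSmooth

section Average

-- A single universe, since the inductions below replace `F` by `E →L[ℝ] F`.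
universe u

variable {α : Type*} [MeasurableSpace α] {μ : Measure α} {E F G : Type u}
  [NormedAddCommGroup F] [NormedSpace ℝ F] [NormedAddCommGroup G] [NormedSpace ℝ G]
  {L : α → F →L[ℝ] G} {τ : α → E} {f : E → F}

lemma integrable_clm_apply_comp_add [NormedAddCommGroup E] (hL : Integrable L μ)
    (hτ : AEStronglyMeasurable τ μ) (hf : Continuous f) (hb : ∃ C, ∀ z, ‖f z‖ ≤ C) (z : E) :
    Integrable (fun a => L a (f (z + τ a))) μ := by
  obtain ⟨C, hC⟩ := hb
  refine (hL.norm.mul_const C).mono' ?_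
    (.of_forall fun a => (L a).le_of_opNorm_le_of_le le_rfl (hC _))
  exact isBoundedBilinearMap_apply.continuous.comp_aestronglyMeasurable
    (hL.1.prodMk (hf.comp_aestronglyMeasurable (hτ.const_add z)))

lemma integrable_smul_comp_add [NormedAddCommGroup E] {k : α → ℝ} (hk : Integrable k μ)
    (hτ : AEStronglyMeasurable τ μ) (hf : Continuous f) (hb : ∃ C, ∀ z, ‖f z‖ ≤ C) (z : E) :
    Integrable (fun a => k a • f (z + τ a)) μ :=
  integrable_clm_apply_comp_add (L := fun a => k a • ContinuousLinearMap.id ℝ F)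
    (hk.smul_const _) hτ hf hb z

variable [NormedAddCommGroup E] [NormedSpace ℝ E]

lemma integrable_postcomp (hL : Integrable L μ) :
    Integrable (fun a => ContinuousLinearMap.compL ℝ E F G (L a)) μ :=
  (ContinuousLinearMap.compL ℝ E F G).integrable_comp hL

namespace BoundedSmooth

lemma hasFDerivAt_integral_clm_apply_comp_add (hL : Integrable L μ)
    (hτ : AEStronglyMeasurable τ μ) (hf : BoundedSmooth f) (z : E) :
    HasFDerivAt (fun z => ∫ a, L a (f (z + τ a)) ∂μ)
      (∫ a, ContinuousLinearMap.compL ℝ E F G (L a) (fderiv ℝ f (z + τ a)) ∂μ) z := by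
  obtain ⟨C, hC⟩ := hf.fderiv.exists_norm_le
  refine hasFDerivAt_integral_of_dominated_of_fderiv_le (bound := fun a => ‖L a‖ * C)
    (F' := fun z a => ContinuousLinearMap.compL ℝ E F G (L a) (fderiv ℝ f (z + τ a)))
    Filter.univ_mem
    (.of_forall fun w => (integrable_clm_apply_comp_add hL hτ hf.continuous hf.exists_norm_le w).1)
    (integrable_clm_apply_comp_add hL hτ hf.continuous hf.exists_norm_le z)
    (integrable_clm_apply_comp_add (integrable_postcomp hL) hτ hf.fderiv.continuous
      hf.fderiv.exists_norm_le z).1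
    (.of_forall fun a w _ => ?_) (hL.norm.mul_const C) (.of_forall fun a w _ => ?_)
  · exact (ContinuousLinearMap.opNorm_comp_le _ _).trans (by gcongr; exact hC _)
  · exact (L a).hasFDerivAt.comp w
      ((hasFDerivAt_comp_add_right (τ a)).2 (hf.differentiable (w + τ a)).hasFDerivAt)

lemma contDiff_integral_clm_apply_comp_add (n : ℕ) (hL : Integrable L μ)
    (hτ : AEStronglyMeasurable τ μ) (hf : BoundedSmooth f) :
    ContDiff ℝ n (fun z => ∫ a, L a (f (z + τ a)) ∂μ) := by
  induction n generalizing F G with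
  | zero =>
    exact contDiff_zero.2 (continuous_iff_continuousAt.2 fun z =>
      (hf.hasFDerivAt_integral_clm_apply_comp_add hL hτ z).continuousAt)
  | succ n ih =>
    exact contDiff_succ_iff_hasFDerivAt.2 ⟨_, ih (integrable_postcomp hL) hf.fderiv,
      hf.hasFDerivAt_integral_clm_apply_comp_add hL hτ⟩

lemma exists_norm_iteratedFDeriv_integral_clm_apply_comp_add_le (n : ℕ) (hL : Integrable L μ)
    (hτ : AEStronglyMeasurable τ μ) (hf : BoundedSmooth f) :
    ∃ C, ∀ z, ‖iteratedFDeriv ℝ n (fun z => ∫ a, L a (f (z + τ a)) ∂μ) z‖ ≤ C := by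
  induction n generalizing F G with
  | zero =>
    obtain ⟨C, hC⟩ := hf.exists_norm_le
    refine ⟨∫ a, ‖L a‖ * C ∂μ, fun z => ?_⟩
    rw [norm_iteratedFDeriv_zero]
    exact norm_integral_le_of_norm_le (hL.norm.mul_const C)
      (.of_forall fun a => (L a).le_of_opNorm_le_of_le le_rfl (hC _))
  | succ n ih =>
    simp only [← norm_iteratedFDeriv_fderiv,
      funext fun z => (hf.hasFDerivAt_integral_clm_apply_comp_add hL hτ z).fderiv]
    exact ih (integrable_postcomp hL) hf.fderiv

lemma integral_clm_apply_comp_add (hL : Integrable L μ) (hτ : AEStronglyMeasurable τ μ)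
    (hf : BoundedSmooth f) : BoundedSmooth fun z => ∫ a, L a (f (z + τ a)) ∂μ :=
  ⟨contDiff_infty.2 fun n => hf.contDiff_integral_clm_apply_comp_add n hL hτ,
    fun n => hf.exists_norm_iteratedFDeriv_integral_clm_apply_comp_add_le n hL hτ⟩

lemma integral_smul_comp_add {k : α → ℝ} (hk : Integrable k μ) (hτ : AEStronglyMeasurable τ μ)
    (hf : BoundedSmooth f) : BoundedSmooth fun z => ∫ a, k a • f (z + τ a) ∂μ :=
  hf.integral_clm_apply_comp_add (L := fun a => k a • ContinuousLinearMap.id ℝ F)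
    (hk.smul_const _) hτ

lemma hasFDerivAt_integral_smul_comp_add {k : α → ℝ} (hk : Integrable k μ)
    (hτ : AEStronglyMeasurable τ μ) (hf : BoundedSmooth f) (z : E) :
    HasFDerivAt (fun z => ∫ a, k a • f (z + τ a) ∂μ)
      (∫ a, k a • fderiv ℝ f (z + τ a) ∂μ) z :=
  hf.hasFDerivAt_integral_clm_apply_comp_add
    (L := fun a => k a • ContinuousLinearMap.id ℝ F) (hk.smul_const _) hτ z

end BoundedSmooth

end Average

section LocallyDominated

variable {α : Type*} [MeasurableSpace α] {μ : Measure α} {E G : Type*} [NormedAddCommGroup E]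
  [NormedAddCommGroup G]

/-- A family `F z` of measurable functions which, for `z` in any given bounded set, is dominated
by one integrable function. This is what differentiation under the integral sign needs. -/
def LocallyDominated (μ : Measure α) (F : E → α → G) : Prop :=
  (∀ z, AEStronglyMeasurable (F z) μ) ∧
    ∀ ρ : ℝ, ∃ b : α → ℝ, Integrable b μ ∧ ∀ z, ‖z‖ ≤ ρ → ∀ a, ‖F z a‖ ≤ b a

namespace LocallyDominated

variable {F : E → α → G}

lemma integrable (hF : LocallyDominated μ F) (z : E) : Integrable (F z) μ := by
  obtain ⟨b, hb, h⟩ := hF.2 ‖z‖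
  exact hb.mono' (hF.1 z) (.of_forall fun a => h z le_rfl a)

variable [NormedSpace ℝ E] [NormedSpace ℝ G] {F' : E → α → E →L[ℝ] G}

lemma of_hasFDerivAt (hF' : LocallyDominated μ F') (hm : ∀ z, AEStronglyMeasurable (F z) μ)
    (h0 : ∀ a, F 0 a = 0) (hd : ∀ z a, HasFDerivAt (fun z => F z a) (F' z a) z) :
    LocallyDominated μ F := by
  refine ⟨hm, fun ρ => ?_⟩
  obtain ⟨b, hb, h⟩ := hF'.2 ρ
  refine ⟨fun a => b a * ρ, hb.mul_const ρ, fun z hz a => ?_⟩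
  have hρ : 0 ≤ ρ := (norm_nonneg z).trans hz
  have hsub : ‖F z a - F 0 a‖ ≤ b a * ‖z - 0‖ :=
    Convex.norm_image_sub_le_of_norm_hasFDerivWithin_le (𝕜 := ℝ) (f := fun z => F z a)
      (f' := fun z => F' z a) (s := Metric.closedBall 0 ρ)
      (fun w _ => (hd w a).hasFDerivWithinAt) (fun w hw => h w (by simpa using hw) a)
      (convex_closedBall _ _) (by simpa using hρ) (by simpa using hz)
  rw [h0, sub_zero, sub_zero] at hsub
  exact hsub.trans (mul_le_mul_of_nonneg_left hz
    ((norm_nonneg _).trans (h 0 (by simpa using hρ) a)))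

lemma hasFDerivAt_integral (hF : LocallyDominated μ F) (hF' : LocallyDominated μ F')
    (hd : ∀ z a, HasFDerivAt (fun z => F z a) (F' z a) z) (z : E) :
    HasFDerivAt (fun z => ∫ a, F z a ∂μ) (∫ a, F' z a ∂μ) z := by
  obtain ⟨b, hb, h⟩ := hF'.2 (‖z‖ + 1)
  refine hasFDerivAt_integral_of_dominated_of_fderiv_le (bound := b) (F' := F')
    (Metric.ball_mem_nhds z one_pos) (.of_forall hF.1) (hF.integrable z)
    (hF'.1 z) (.of_forall fun a w hw => h w ?_ a) hb (.of_forall fun a w _ => hd w a)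
  have hwz : ‖w - z‖ < 1 := by simpa [dist_eq_norm] using hw
  have := norm_le_norm_add_norm_sub' w z
  linarith

end LocallyDominated

end LocallyDominated

section RenormalizedConvolution

open Module (finrank)

lemma one_add_norm_sub_rpow_neg_le {E : Type*} [SeminormedAddCommGroup E] {r ρ : ℝ} (hr : 0 ≤ r)
    {z : E} (hz : ‖z‖ ≤ ρ) (η : E) :
    (1 + ‖z - η‖) ^ (-r) ≤ (1 + ρ) ^ r * (1 + ‖η‖) ^ (-r) := by
  have hρ : 0 ≤ ρ := (norm_nonneg z).trans hz
  have hη : 1 + ‖η‖ ≤ (1 + ρ) * (1 + ‖z - η‖) := by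
    have := norm_sub_norm_le η z
    rw [norm_sub_rev] at this
    nlinarith [norm_nonneg (z - η)]
  rw [Real.rpow_neg (by positivity), Real.rpow_neg (by positivity), ← div_eq_mul_inv,
    inv_le_iff_one_le_mul₀ (by positivity), div_mul_eq_mul_div, one_le_div (by positivity),
    ← Real.mul_rpow (by positivity) (by positivity)]
  exact Real.rpow_le_rpow (by positivity) hη hr

section

variable {E F : Type*} [NormedAddCommGroup E] [NormedSpace ℝ E] [NormedAddCommGroup F]
  [NormedSpace ℝ F] {f : E → F}

lemma hasFDerivAt_smul_comp_sub {f' : E →L[ℝ] F} {z η : E} (hf : HasFDerivAt f f' (z - η))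
    (c : ℝ) (b : F) : HasFDerivAt (fun z => c • (f (z - η) - b)) (c • f') z :=
  (((hasFDerivAt_comp_sub η).2 hf).sub_const b).const_smul c

lemma hasFDerivAt_smul_sub_taylor_one {f' : E →L[ℝ] F} {z η : E} (hf : HasFDerivAt f f' (z - η))
    (c : ℝ) (L : E →L[ℝ] F) :
    HasFDerivAt (fun z => c • (f (z - η) - f (-η) - L z)) (c • (f' - L)) z :=
  ((((hasFDerivAt_comp_sub η).2 hf).sub_const _).sub L.hasFDerivAt).const_smul c

lemma hasFDerivAt_smul_sub_taylor_two {f' L : E →L[ℝ] F} {B : E →L[ℝ] E →L[ℝ] F} {z η : E}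
    (hf : HasFDerivAt f f' (z - η)) (hB : ∀ v w, B v w = B w v) (c : ℝ) :
    HasFDerivAt (fun z => c • (f (z - η) - f (-η) - L z - (1 / 2 : ℝ) • B z z))
      (c • (f' - L - B z)) z := by
  have h1 := ((hasFDerivAt_comp_sub η).2 hf).sub_const (f (-η))
  have h2 := B.hasFDerivAt_of_bilinear (hasFDerivAt_id z) (hasFDerivAt_id z)
  refine (((h1.sub L.hasFDerivAt).sub (h2.const_smul (1 / 2 : ℝ))).const_smul c).congr_fderiv ?_
  ext v
  simp only [smul_apply, sub_apply, add_apply, ContinuousLinearMap.precompR_apply,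
    ContinuousLinearMap.precompL_apply, ContinuousLinearMap.compL_apply,
    ContinuousLinearMap.comp_apply, ContinuousLinearMap.id_apply, id_eq, hB v z]
  module

/-- A `C¹` function whose derivative is `O((1 + ‖z‖) ^ (-r))`. For `r` larger than the dimension
its differences `f (z - η) - f (-η)` are integrable in `η`. -/
structure HasFDerivDecay (f : E → F) (r : ℝ) : Prop where
  contDiff : ContDiff ℝ 1 f
  exists_norm_fderiv_le : ∃ C, ∀ z, ‖fderiv ℝ f z‖ ≤ C * (1 + ‖z‖) ^ (-r)

namespace HasFDerivDecay

variable {r : ℝ}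

protected lemma continuous (hf : HasFDerivDecay f r) : Continuous f := hf.contDiff.continuous

protected lemma hasFDerivAt (hf : HasFDerivDecay f r) (z : E) :
    HasFDerivAt f (fderiv ℝ f z) z :=
  (hf.contDiff.differentiable one_ne_zero z).hasFDerivAt

lemma continuous_fderiv (hf : HasFDerivDecay f r) : Continuous (fderiv ℝ f) :=
  hf.contDiff.continuous_fderiv one_ne_zero

lemma of_hasFDerivAt {f' : E → E →L[ℝ] F} (hf : ContDiff ℝ 1 f)
    (hf' : ∀ z, HasFDerivAt f (f' z) z) {C : ℝ} (hC : ∀ z, ‖f' z‖ ≤ C * (1 + ‖z‖) ^ (-r)) :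
    HasFDerivDecay f r :=
  ⟨hf, C, fun z => (hf' z).fderiv ▸ hC z⟩

lemma clm_comp {G : Type*} [NormedAddCommGroup G] [NormedSpace ℝ G] (hf : HasFDerivDecay f r)
    (L : F →L[ℝ] G) : HasFDerivDecay (fun z => L (f z)) r := by
  obtain ⟨C, hC⟩ := hf.exists_norm_fderiv_le
  refine .of_hasFDerivAt (C := ‖L‖ * C) (L.contDiff.comp hf.contDiff)
    (fun z => L.hasFDerivAt.comp z (hf.hasFDerivAt z)) fun z => ?_
  rw [mul_assoc]
  exact (L.opNorm_comp_le _).trans (by gcongr; exact hC z)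

protected lemma add {g : E → F} (hf : HasFDerivDecay f r) (hg : HasFDerivDecay g r) :
    HasFDerivDecay (fun z => f z + g z) r := by
  obtain ⟨C, hC⟩ := hf.exists_norm_fderiv_le
  obtain ⟨D, hD⟩ := hg.exists_norm_fderiv_le
  refine .of_hasFDerivAt (C := C + D) (hf.contDiff.add hg.contDiff)
    (fun z => (hf.hasFDerivAt z).add (hg.hasFDerivAt z)) fun z => ?_
  rw [add_mul]
  exact norm_add_le_of_le (hC z) (hD z)

end HasFDerivDecay

end

section

variable {E F : Type*} [NormedAddCommGroup E] [NormedAddCommGroup F] [NormedSpace ℝ F]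
  [MeasurableSpace E]

/-- The convolution of `f` and `g`, renormalized to vanish at `0` so that it makes sense for
bounded `g` as soon as the derivative of `f` (rather than `f` itself) is integrable. -/
noncomputable def renormConv (μ : Measure E) (f : E → F) (g : E → ℝ) (z : E) : F :=
  ∫ η, g η • (f (z - η) - f (-η)) ∂μ

namespace HasFDerivDecay

variable [NormedSpace ℝ E] [BorelSpace E] [FiniteDimensional ℝ E] {μ : Measure E}
  [μ.IsAddHaarMeasure] {f : E → F} {g : E → ℝ} {r : ℝ}

lemma integrable_fderiv (hr : finrank ℝ E < r) (hf : HasFDerivDecay f r) :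
    Integrable (fderiv ℝ f) μ := by
  obtain ⟨C, hC⟩ := hf.exists_norm_fderiv_le
  exact ((integrable_one_add_norm hr).const_mul C).mono'
    hf.continuous_fderiv.aestronglyMeasurable (.of_forall hC)

lemma locallyDominated_smul_fderiv (hr : finrank ℝ E < r) (hf : HasFDerivDecay f r)
    (hg : Continuous g) (hb : ∃ M, ∀ z, ‖g z‖ ≤ M) :
    LocallyDominated μ fun z η => g η • fderiv ℝ f (z - η) := by
  obtain ⟨M, hM⟩ := hb
  obtain ⟨C, hC⟩ := hf.exists_norm_fderiv_le
  have hr0 : 0 ≤ r := (Nat.cast_nonneg _).trans hr.le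
  have hC0 : 0 ≤ C := by simpa using (norm_nonneg _).trans (hC 0)
  have := hf.continuous_fderiv
  refine ⟨fun z => (by fun_prop : Continuous _).aestronglyMeasurable, fun ρ =>
    ⟨fun η => M * (C * ((1 + ρ) ^ r * (1 + ‖η‖) ^ (-r))),
      (((integrable_one_add_norm hr).const_mul _).const_mul _).const_mul _, fun z hz η => ?_⟩⟩
  rw [norm_smul]
  exact mul_le_mul (hM η) ((hC _).trans (mul_le_mul_of_nonneg_left
    (one_add_norm_sub_rpow_neg_le hr0 hz η) hC0)) (norm_nonneg _) ((norm_nonneg _).trans (hM η))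

lemma locallyDominated_smul_sub (hr : finrank ℝ E < r) (hf : HasFDerivDecay f r)
    (hg : Continuous g) (hb : ∃ M, ∀ z, ‖g z‖ ≤ M) :
    LocallyDominated μ fun z η => g η • (f (z - η) - f (-η)) := by
  have := hf.continuous
  exact (hf.locallyDominated_smul_fderiv hr hg hb).of_hasFDerivAt
    (fun z => (by fun_prop : Continuous _).aestronglyMeasurable) (fun η => by simp)
    fun z η => hasFDerivAt_smul_comp_sub (hf.hasFDerivAt _) _ _

lemma hasFDerivAt_renormConv (hr : finrank ℝ E < r) (hf : HasFDerivDecay f r)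
    (hg : Continuous g) (hb : ∃ M, ∀ z, ‖g z‖ ≤ M) (z : E) :
    HasFDerivAt (renormConv μ f g) (∫ η, g η • fderiv ℝ f (z - η) ∂μ) z :=
  (hf.locallyDominated_smul_sub hr hg hb).hasFDerivAt_integral
    (hf.locallyDominated_smul_fderiv hr hg hb)
    (fun _ _ => hasFDerivAt_smul_comp_sub (hf.hasFDerivAt _) _ _) z

lemma integrable_smul_sub (hr : finrank ℝ E < r) (hf : HasFDerivDecay f r)
    (hg : Continuous g) (hb : ∃ M, ∀ z, ‖g z‖ ≤ M) (z : E) :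
    Integrable (fun η => g η • (f (z - η) - f (-η))) μ :=
  (hf.locallyDominated_smul_sub hr hg hb).integrable z

lemma exists_hasHessian_renormConv {K : E → F} {K' : E → E →L[ℝ] F} {K'' : E → E →L[ℝ] E →L[ℝ] F}
    (hr : finrank ℝ E < r) (hK : ∀ z, HasFDerivAt K (K' z) z)
    (hK' : ∀ z, HasFDerivAt K' (K'' z) z) (hK'' : HasFDerivDecay K'' r)
    (hg : Continuous g) (hb : ∃ M, ∀ z, ‖g z‖ ≤ M) :
    ∃ (P : E → F) (P' : E → E →L[ℝ] F), (∀ z, HasFDerivAt P (P' z) z) ∧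
      ∀ z, HasFDerivAt P' (renormConv μ K'' g z) z := by
  have c0 : Continuous K := continuous_iff_continuousAt.2 fun z => (hK z).continuousAt
  have c1 : Continuous K' := continuous_iff_continuousAt.2 fun z => (hK' z).continuousAt
  have c2 : Continuous K'' := hK''.continuous
  have hd1 (z η : E) := hasFDerivAt_smul_sub_taylor_one (hK' (z - η)) (g η) (K'' (-η))
  have hd0 (z η : E) := hasFDerivAt_smul_sub_taylor_two (L := K' (-η)) (hK (z - η))
    (second_derivative_symmetric hK (hK' (-η))) (g η)
  have d2 := hK''.locallyDominated_smul_sub (μ := μ) hr hg hb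
  have d1 := d2.of_hasFDerivAt (fun z => (by fun_prop : Continuous _).aestronglyMeasurable)
    (fun η => by simp) hd1
  have d0 := d1.of_hasFDerivAt (fun z => (by fun_prop : Continuous _).aestronglyMeasurable)
    (fun η => by simp) hd0
  exact ⟨_, _, d0.hasFDerivAt_integral d1 hd0, d1.hasFDerivAt_integral d2 hd1⟩

end HasFDerivDecay

end

namespace BoundedSmooth

variable {E F : Type} [NormedAddCommGroup E] [NormedSpace ℝ E] [FiniteDimensional ℝ E]
  [MeasurableSpace E] [BorelSpace E] {μ : Measure E} [μ.IsAddHaarMeasure] [NormedAddCommGroup F]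
  [NormedSpace ℝ F] {g : E → ℝ}

lemma integral_smul_comp_sub {k : E → F} (hk : Integrable k μ) (hg : BoundedSmooth g) :
    BoundedSmooth fun z => ∫ η, g η • k (z - η) ∂μ := by
  have hL : Integrable (fun w => ContinuousLinearMap.toSpanSingleton ℝ (k w)) μ :=
    (ContinuousLinearMap.toSpanSingletonCLE (𝕜 := ℝ)).toContinuousLinearMap.integrable_comp hk
  convert hg.integral_clm_apply_comp_add hL continuous_neg.aestronglyMeasurable using 2 with z
  rw [← integral_sub_left_eq_self _ _ z]
  simp [sub_eq_add_neg]

lemma renormConv {f : E → F} {r : ℝ} (hr : finrank ℝ E < r) (hf : HasFDerivDecay f r)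
    (hg : BoundedSmooth g) (hb : ∃ M, ∀ z, ‖renormConv μ f g z‖ ≤ M) :
    BoundedSmooth (renormConv μ f g) :=
  .of_hasFDerivAt hb (hf.hasFDerivAt_renormConv hr hg.continuous hg.exists_norm_le)
    (hg.integral_smul_comp_sub (hf.integrable_fderiv hr))

end BoundedSmooth

end RenormalizedConvolution

section Weight

open Module (finrank)

variable {E : Type*} [NormedAddCommGroup E]

/-- The weight `q = 1 / (1 + |z|²)`, whose powers are the smooth integrable profiles from which
all kernels below are built. -/
noncomputable def weight (z : E) : ℝ := (1 + ‖z‖ ^ 2)⁻¹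

lemma weight_pos (z : E) : 0 < weight z := by unfold weight; positivity

lemma weight_le_one (z : E) : weight z ≤ 1 := inv_le_one_of_one_le₀ (by simp)

lemma weight_neg (z : E) : weight (-z) = weight z := by simp [weight]

lemma norm_sq_mul_weight (z : E) : ‖z‖ ^ 2 * weight z = 1 - weight z := by
  unfold weight; field_simp; ring

lemma weight_mul_one_add_norm_sq_le (z : E) : weight z * (1 + ‖z‖) ^ 2 ≤ 2 := by
  rw [weight, inv_mul_le_iff₀ (by positivity)]
  nlinarith [sq_nonneg (1 - ‖z‖)]

lemma weight_mul_norm_le_one (z : E) : weight z * ‖z‖ ≤ 1 := by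
  nlinarith [norm_sq_mul_weight z, weight_pos z, weight_le_one z, sq_nonneg (1 - ‖z‖)]

lemma integrable_weight_pow [NormedSpace ℝ E] [FiniteDimensional ℝ E] [MeasurableSpace E]
    [BorelSpace E] (μ : Measure E) [μ.IsAddHaarMeasure] {n : ℕ} (hn : finrank ℝ E < 2 * n) :
    Integrable (fun z : E => weight z ^ n) μ := by
  convert integrable_rpow_neg_one_add_norm_sq (μ := μ) (E := E) (r := 2 * n) (mod_cast hn) using 2
    with z
  rw [weight, inv_pow, ← Real.rpow_natCast, ← Real.rpow_neg (by positivity)]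
  congr 1
  ring

variable [InnerProductSpace ℝ E]

/-- The inner product as a bilinear map: `innerSL` without the conjugation in its type. -/
noncomputable def innerBilin : E →L[ℝ] E →L[ℝ] ℝ := innerSL ℝ

lemma innerBilin_apply (v w : E) : innerBilin v w = inner ℝ v w := rfl

lemma norm_innerBilin_apply (v : E) : ‖innerBilin v‖ = ‖v‖ := innerSL_apply_norm ℝ v

lemma hasFDerivAt_weight_pow (n : ℕ) (z : E) :
    HasFDerivAt (fun z : E => weight z ^ n)
      ((-(2 * n) * weight z ^ (n + 1)) • innerBilin z) z := by
  have hq : HasFDerivAt (weight : E → ℝ) (-(weight z ^ 2) • (2 • innerBilin z)) z :=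
    ((hasDerivAt_inv (by positivity : 1 + ‖z‖ ^ 2 ≠ 0)).comp_hasFDerivAt z
      ((hasStrictFDerivAt_norm_sq z).hasFDerivAt.const_add 1)).congr_fderiv
      (by rw [weight, inv_pow]; rfl)
  refine (hq.pow n).congr_fderiv ?_
  ext v
  rcases n with _ | n
  · simp
  · simp only [weight, add_tsub_cancel_right, smul_apply, smul_eq_mul, nsmul_eq_mul]
    push_cast
    ring

lemma contDiff_weight {n : WithTop ℕ∞} : ContDiff ℝ n (weight : E → ℝ) :=
  (contDiff_const.add (contDiff_norm_sq ℝ)).inv fun z => by positivity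

lemma le_mul_rpow_neg_three {x t C : ℝ} (ht : 0 < t) (h : x * t ^ 3 ≤ C) :
    x ≤ C * t ^ (-3 : ℝ) := by
  rwa [Real.rpow_neg ht.le, Real.rpow_ofNat, ← div_eq_mul_inv, le_div_iff₀ (by positivity)]

lemma hasFDerivDecay_weight_pow_three : HasFDerivDecay (fun z : E => weight z ^ 3) 3 := by
  refine .of_hasFDerivAt (C := 24) (contDiff_weight.pow 3) (hasFDerivAt_weight_pow 3) fun z =>
    le_mul_rpow_neg_three (by positivity) ?_
  have hq := weight_pos z
  calc ‖(-(2 * (3 : ℕ)) * weight z ^ (3 + 1)) • innerBilin z‖ * (1 + ‖z‖) ^ 3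
      = 6 * weight z ^ 4 * (‖z‖ * (1 + ‖z‖) ^ 3) := by
        rw [norm_smul, norm_innerBilin_apply, Real.norm_eq_abs, abs_mul, abs_neg,
          abs_of_pos (pow_pos hq _)]
        norm_num
        ring
    _ ≤ 6 * weight z ^ 4 * ((1 + ‖z‖) * (1 + ‖z‖) ^ 3) := by gcongr; linarith
    _ = 6 * weight z ^ 2 * (weight z * (1 + ‖z‖) ^ 2) ^ 2 := by ring
    _ ≤ 6 * 1 ^ 2 * 2 ^ 2 := by
        gcongr
        exacts [weight_le_one z, weight_mul_one_add_norm_sq_le z]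
    _ = 24 := by norm_num

lemma abs_weight_mul_inner_le (z v : E) : |weight z * inner ℝ z v| ≤ ‖v‖ := by
  calc |weight z * inner ℝ z v| ≤ weight z * (‖z‖ * ‖v‖) := by
        rw [abs_mul, abs_of_pos (weight_pos z)]
        exact mul_le_mul_of_nonneg_left (abs_real_inner_le_norm z v) (weight_pos z).le
    _ = weight z * ‖z‖ * ‖v‖ := by ring
    _ ≤ ‖v‖ := mul_le_of_le_one_left (norm_nonneg v) (weight_mul_norm_le_one z)

section Haar

variable [FiniteDimensional ℝ E] [MeasurableSpace E] [BorelSpace E] (μ : Measure E)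
  [μ.IsAddHaarMeasure] {n : ℕ} {f : E → ℝ}

lemma integrable_weight_pow_mul (hn : finrank ℝ E < 2 * n) (hf : Continuous f)
    (hb : ∃ C, ∀ z, ‖f z‖ ≤ C) : Integrable (fun z => weight z ^ n * f z) μ := by
  obtain ⟨C, hC⟩ := hb
  exact (integrable_weight_pow μ hn).mul_bdd hf.aestronglyMeasurable (.of_forall hC)

lemma integrable_weight_pow_mul_inner_mul (hn : finrank ℝ E < 2 * n) (hf : Continuous f)
    (hb : ∃ C, ∀ z, ‖f z‖ ≤ C) (v : E) :
    Integrable (fun z => weight z ^ (n + 1) * (inner ℝ z v * f z)) μ := by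
  obtain ⟨C, hC⟩ := hb
  have hq : Continuous (weight : E → ℝ) := (contDiff_weight (n := 0)).continuous
  convert integrable_weight_pow_mul μ hn (f := fun z => weight z * inner ℝ z v * f z)
    (by fun_prop) ⟨‖v‖ * C, fun z => ?_⟩ using 2 with z
  · ring
  · rw [norm_mul]
    exact mul_le_mul (abs_weight_mul_inner_le z v) (hC z) (norm_nonneg _) (norm_nonneg _)

lemma integral_weight_pow_mul_inner_mul (hn : finrank ℝ E < 2 * n) (hf : BoundedSmooth f) (v : E) :
    2 * n * ∫ z, weight z ^ (n + 1) * (inner ℝ z v * f z) ∂μ =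
      ∫ z, weight z ^ n * fderiv ℝ f z v ∂μ := by
  have hD (z : E) : fderiv ℝ (fun z : E => weight z ^ n) z v * f z =
      -(2 * n) * (weight z ^ (n + 1) * (inner ℝ z v * f z)) := by
    rw [(hasFDerivAt_weight_pow n z).fderiv, smul_apply, innerBilin_apply, smul_eq_mul]
    ring
  obtain ⟨C, hC⟩ := hf.fderiv.exists_norm_le
  rw [integral_mul_fderiv_eq_neg_fderiv_mul_of_integrable,
    ← integral_const_mul, ← integral_neg]
  · simp only [hD, neg_mul, neg_neg]
  · simp only [hD]
    exact (integrable_weight_pow_mul_inner_mul μ hn hf.continuous hf.exists_norm_le v).const_mul _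
  · exact integrable_weight_pow_mul μ hn (hf.fderiv.continuous.clm_apply continuous_const)
      ⟨C * ‖v‖, fun z => (fderiv ℝ f z).le_of_opNorm_le (hC z) v⟩
  · exact integrable_weight_pow_mul μ hn hf.continuous hf.exists_norm_le
  · exact fun z _ => (hasFDerivAt_weight_pow n z).differentiableAt
  · exact fun z _ => hf.differentiable z

end Haar

end Weight

section LogKernel

open ComplexConjugate

/-- The complex number `b` viewed as the symmetric real bilinear form `(v, w) ↦ Re (b v w)`. -/
noncomputable def reMul : ℂ →L[ℝ] ℂ →L[ℝ] ℂ →L[ℝ] ℝ :=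
  ContinuousLinearMap.compL ℝ ℂ ℂ (ℂ →L[ℝ] ℝ)
    (ContinuousLinearMap.compL ℝ ℂ ℂ ℝ reCLM ∘L ContinuousLinearMap.mul ℝ ℂ) ∘L
      ContinuousLinearMap.mul ℝ ℂ

lemma reMul_apply (b v w : ℂ) : reMul b v w = (b * v * w).re := rfl

/-- A kernel behaving like `2 log |z|` at infinity, smoothed out at the origin. -/
noncomputable def logKernel (z : ℂ) : ℝ := -Real.log (weight z) - weight z

/-- A smooth substitute for the kernel `1 / z ^ 2`. -/
noncomputable def smoothInvSq (z : ℂ) : ℂ := (weight z ^ 2 + 2 * weight z ^ 3) • conj z ^ 2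

/-- The Hessian of `logKernel`, split into its trace and its traceless part. -/
noncomputable def logHessian (z : ℂ) : ℂ →L[ℝ] ℂ →L[ℝ] ℝ :=
  (4 * weight z ^ 3) • innerBilin - (2 : ℝ) • reMul (smoothInvSq z)

lemma logHessian_eq (z : ℂ) : logHessian z =
    (2 * (weight z + weight z ^ 2)) • innerBilin +
      (-(4 * (weight z ^ 2 + 2 * weight z ^ 3)) • innerBilin z).smulRight (innerBilin z) := by
  ext v w
  have hq : (z.re ^ 2 + z.im ^ 2) * weight z = 1 - weight z := by
    rw [← norm_sq_mul_weight z, ← normSq_eq_norm_sq, normSq_apply, sq, sq]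
  simp only [logHessian, smoothInvSq, reMul_apply, innerBilin_apply, Complex.inner, sub_apply,
    add_apply, smul_apply, ContinuousLinearMap.smulRight_apply, smul_eq_mul, real_smul, mul_re,
    mul_im, conj_re, conj_im, ofReal_re, ofReal_im, sq]
  linear_combination 2 * (weight z + 2 * weight z ^ 2) * (v.re * w.re + v.im * w.im) * hq

lemma hasFDerivAt_logKernel (z : ℂ) :
    HasFDerivAt logKernel ((2 * (weight z + weight z ^ 2)) • innerBilin z) z := by
  have hq : HasFDerivAt weight (-(2 * weight z ^ 2) • innerBilin z) z := by
    simpa using hasFDerivAt_weight_pow 1 z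
  refine ((hq.log (weight_pos z).ne').neg.sub hq).congr_fderiv ?_
  have := (weight_pos z).ne'
  ext v
  simp only [sub_apply, neg_apply, smul_apply, smul_eq_mul]
  field_simp
  ring

lemma hasFDerivAt_fderiv_logKernel (z : ℂ) :
    HasFDerivAt (fun z : ℂ => (2 * (weight z + weight z ^ 2)) • innerBilin z) (logHessian z) z := by
  have hq : HasFDerivAt weight (-(2 * weight z ^ 2) • innerBilin z) z := by
    simpa using hasFDerivAt_weight_pow 1 z
  refine (((hq.add (hasFDerivAt_weight_pow 2 z)).const_mul 2).smul
    innerBilin.hasFDerivAt).congr_fderiv ?_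
  rw [logHessian_eq]
  congr 2
  module

lemma hasFDerivAt_smoothInvSq (z : ℂ) : HasFDerivAt smoothInvSq
    ((weight z ^ 2 + 2 * weight z ^ 3) • (2 * conj z) • (conjCLE : ℂ →L[ℝ] ℂ) -
      ((4 * weight z ^ 3 + 12 * weight z ^ 4) • innerBilin z).smulRight (conj z ^ 2)) z := by
  refine (((hasFDerivAt_weight_pow 2 z).add ((hasFDerivAt_weight_pow 3 z).const_mul 2)).smul
    (conjCLE.hasFDerivAt.pow 2)).congr_fderiv ?_
  ext v
  simp only [add_apply, sub_apply, smul_apply, Pi.add_apply, ContinuousLinearMap.smulRight_apply,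
    ContinuousLinearEquiv.coe_coe, conjCLE_apply, smul_eq_mul, nsmul_eq_mul, real_smul]
  push_cast
  ring

lemma contDiff_smoothInvSq {n : WithTop ℕ∞} : ContDiff ℝ n smoothInvSq :=
  ((contDiff_weight.pow 2).add (contDiff_const.mul (contDiff_weight.pow 3))).smul
    (conjCLE.contDiff.pow 2)

lemma hasFDerivDecay_smoothInvSq : HasFDerivDecay smoothInvSq 3 := by
  refine .of_hasFDerivAt (C := 152) contDiff_smoothInvSq hasFDerivAt_smoothInvSq fun z =>
    le_mul_rpow_neg_three (by positivity) ?_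
  have hq := weight_pos z
  have hq1 := weight_le_one z
  have ht : ‖z‖ ≤ 1 + ‖z‖ := by linarith
  set q := weight z
  calc ‖(q ^ 2 + 2 * q ^ 3) • (2 * conj z) • (conjCLE : ℂ →L[ℝ] ℂ) -
        ((4 * q ^ 3 + 12 * q ^ 4) • innerBilin z).smulRight (conj z ^ 2)‖ * (1 + ‖z‖) ^ 3
      ≤ ((q ^ 2 + 2 * q ^ 3) * (2 * ‖z‖) + (4 * q ^ 3 + 12 * q ^ 4) * ‖z‖ * ‖z‖ ^ 2) *
          (1 + ‖z‖) ^ 3 := by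
        gcongr
        refine norm_sub_le_of_le ?_ ?_
        · rw [norm_smul, norm_smul, Real.norm_of_nonneg (by positivity)]
          simp
        · rw [ContinuousLinearMap.norm_smulRight_apply, norm_smul, norm_innerBilin_apply,
            Real.norm_of_nonneg (by positivity), norm_pow, norm_conj]
    _ ≤ ((q ^ 2 + 2 * q ^ 2) * (2 * (1 + ‖z‖)) +
          (4 * q ^ 3 + 12 * q ^ 3) * (1 + ‖z‖) * (1 + ‖z‖) ^ 2) * (1 + ‖z‖) ^ 3 := by
        have h3 : q ^ 3 ≤ q ^ 2 := pow_le_pow_of_le_one hq.le hq1 (by norm_num)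
        have h4 : q ^ 4 ≤ q ^ 3 := pow_le_pow_of_le_one hq.le hq1 (by norm_num)
        gcongr
    _ = 6 * (q * (1 + ‖z‖) ^ 2) ^ 2 + 16 * (q * (1 + ‖z‖) ^ 2) ^ 3 := by ring
    _ ≤ 6 * 2 ^ 2 + 16 * 2 ^ 3 := by gcongr <;> exact weight_mul_one_add_norm_sq_le z
    _ = 152 := by norm_num

lemma hasFDerivDecay_logHessian : HasFDerivDecay logHessian 3 := by
  convert (hasFDerivDecay_weight_pow_three.clm_comp
    (ContinuousLinearMap.toSpanSingleton ℝ ((4 : ℝ) • innerBilin))).add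
    (hasFDerivDecay_smoothInvSq.clm_comp (-(2 : ℝ) • reMul)) using 2 with z
  rw [logHessian, sub_eq_add_neg, mul_comm, mul_smul]
  simp

end LogKernel

section AnnulusBound

open ComplexConjugate Filter
open scoped Real

/-- The truncated Beurling transform `∫_{1 ≤ |η| ≤ r} h(ζ + η) / η² dm(η)`. -/
noncomputable def annulusIntegral (h : ℂ → ℝ) (ζ : ℂ) (r : ℝ) : ℂ :=
  ∫ η in {η : ℂ | 1 ≤ ‖η‖ ∧ ‖η‖ ≤ r}, (h (ζ + η) : ℂ) / η ^ 2

lemma norm_setIntegral_sub_setIntegral_le {α F : Type*} [MeasurableSpace α] {μ : Measure α}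
    [NormedAddCommGroup F] [NormedSpace ℝ F] {f : α → F} {s t u : Set α} {C : ℝ}
    (hs : MeasurableSet s) (ht : MeasurableSet t) (hsu : s ⊆ u) (htu : t ⊆ u) (hu : μ u ≠ ⊤)
    (hfs : IntegrableOn f s μ) (hft : IntegrableOn f t μ) (hC : 0 ≤ C)
    (hf : ∀ x ∈ u, x ∉ s ∩ t → ‖f x‖ ≤ C) :
    ‖∫ x in s, f x ∂μ - ∫ x in t, f x ∂μ‖ ≤ 2 * (C * μ.real u) := by
  have hdiff (v : Set α) (hvu : v ⊆ u) (hv : Disjoint v (s ∩ t)) :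
      ‖∫ x in v, f x ∂μ‖ ≤ C * μ.real u :=
    (norm_setIntegral_le_of_norm_le_const ((measure_mono hvu).trans_lt hu.lt_top) fun x hx =>
      hf x (hvu hx) (Set.disjoint_left.1 hv hx)).trans (by gcongr)
  rw [← integral_inter_add_sdiff ht hfs, ← integral_inter_add_sdiff hs hft, Set.inter_comm t s,
    add_sub_add_left_eq_sub, two_mul]
  refine norm_sub_le_of_le (hdiff _ (Set.sdiff_subset.trans hsu) ?_)
    (hdiff _ (Set.sdiff_subset.trans htu) ?_)
  · exact Set.disjoint_left.2 fun x hx hx' => hx.2 hx'.2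
  · exact Set.disjoint_left.2 fun x hx hx' => hx.2 hx'.1

lemma smoothInvSq_neg (z : ℂ) : smoothInvSq (-z) = smoothInvSq z := by
  simp [smoothInvSq, weight_neg]

lemma norm_smoothInvSq (z : ℂ) :
    ‖smoothInvSq z‖ = (weight z ^ 2 + 2 * weight z ^ 3) * ‖z‖ ^ 2 := by
  have := weight_pos z
  rw [smoothInvSq, norm_smul, norm_pow, norm_conj, Real.norm_of_nonneg (by positivity)]

lemma norm_smoothInvSq_le (z : ℂ) : ‖smoothInvSq z‖ ≤ 3 * weight z ^ 2 * ‖z‖ ^ 2 := by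
  rw [norm_smoothInvSq]
  gcongr
  have := pow_le_pow_of_le_one (weight_pos z).le (weight_le_one z) (by norm_num : 2 ≤ 3)
  linarith

lemma norm_smoothInvSq_le_div {z : ℂ} (hz : z ≠ 0) : ‖smoothInvSq z‖ ≤ 3 / ‖z‖ ^ 2 := by
  have hq := weight_pos z
  have : 0 < ‖z‖ := norm_pos_iff.2 hz
  rw [le_div_iff₀ (by positivity)]
  calc ‖smoothInvSq z‖ * ‖z‖ ^ 2 ≤ 3 * weight z ^ 2 * ‖z‖ ^ 2 * ‖z‖ ^ 2 := by
        gcongr; exact norm_smoothInvSq_le z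
    _ = 3 * (‖z‖ ^ 2 * weight z) ^ 2 := by ring
    _ ≤ 3 * 1 ^ 2 := by
        gcongr
        linarith [norm_sq_mul_weight z]
    _ = 3 := by norm_num

lemma norm_smoothInvSq_sub_inv_sq_le {z : ℂ} (hz : 1 ≤ ‖z‖) :
    ‖smoothInvSq z - (z ^ 2)⁻¹‖ ≤ 3 * weight z ^ 2 := by
  have hq := weight_pos z
  have hinv : (z ^ 2)⁻¹ = ((‖z‖ ^ 2)⁻¹ ^ 2) • conj z ^ 2 := by
    rw [← inv_pow, inv_def, mul_pow, normSq_eq_norm_sq, real_smul]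
    push_cast
    ring
  obtain ⟨p, hp⟩ : ∃ p, p = (‖z‖ ^ 2)⁻¹ := ⟨_, rfl⟩
  have hp0 : 0 ≤ p := by rw [hp]; positivity
  have hp1 : p ≤ 1 := hp ▸ inv_le_one_of_one_le₀ (one_le_pow₀ hz)
  have hzp : ‖z‖ ^ 2 * p = 1 := hp ▸ mul_inv_cancel₀ (by positivity)
  have hsub : ‖smoothInvSq z - (z ^ 2)⁻¹‖ = 2 * weight z ^ 3 + weight z ^ 2 * p := by
    rw [hinv, smoothInvSq, ← hp, ← sub_smul, norm_smul, norm_pow, norm_conj,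
      ← abs_of_nonneg (sq_nonneg ‖z‖), Real.norm_eq_abs, ← abs_mul, abs_eq (by positivity)]
    right
    linear_combination (weight z + 2 * weight z ^ 2 + (1 + weight z) * p) *
      norm_sq_mul_weight z - (p + weight z * (1 + weight z)) * hzp
  have := pow_le_pow_of_le_one hq.le (weight_le_one z) (by norm_num : 2 ≤ 3)
  rw [hsub]
  nlinarith [mul_le_of_le_one_right (sq_nonneg (weight z)) hp1]

lemma norm_smoothInvSq_sub_indicator_le (z : ℂ) :
    ‖smoothInvSq z - {z : ℂ | 1 ≤ ‖z‖}.indicator (fun z => (z ^ 2)⁻¹) z‖ ≤ 3 * weight z ^ 2 := by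
  by_cases hz : 1 ≤ ‖z‖
  · rw [Set.indicator_of_mem (by exact hz)]
    exact norm_smoothInvSq_sub_inv_sq_le hz
  · rw [Set.indicator_of_notMem (by exact hz), sub_zero]
    refine (norm_smoothInvSq_le z).trans (mul_le_of_le_one_right ?_ ?_)
    · have := weight_pos z
      positivity
    · exact pow_le_one₀ (norm_nonneg z) (not_le.1 hz).le

variable {g : ℂ → ℝ} {M : ℝ}

lemma annulusIntegral_eq_setIntegral_indicator (g : ℂ → ℝ) (z : ℂ) (r : ℝ) :
    annulusIntegral g z r = ∫ η in Metric.closedBall 0 r,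
      g (z + η) • {z : ℂ | 1 ≤ ‖z‖}.indicator (fun z => (z ^ 2)⁻¹) η := by
  have hset : {η : ℂ | 1 ≤ ‖η‖ ∧ ‖η‖ ≤ r} = Metric.closedBall 0 r ∩ {z : ℂ | 1 ≤ ‖z‖} := by
    ext
    simp [and_comm]
  rw [annulusIntegral, hset,
    ← setIntegral_indicator (measurableSet_le measurable_const measurable_norm)]
  congr 1 with η
  by_cases hη : 1 ≤ ‖η‖ <;> simp [hη, div_eq_mul_inv]

lemma norm_setIntegral_smoothInvSq_sub_annulusIntegral_le (hg : Continuous g)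
    (hM : ∀ z, ‖g z‖ ≤ M) (z : ℂ) (r : ℝ) :
    ‖(∫ η in Metric.closedBall 0 r, g (z + η) • smoothInvSq η) - annulusIntegral g z r‖ ≤
      ∫ η : ℂ, M * (3 * weight η ^ 2) := by
  set κ : ℂ → ℂ := {z : ℂ | 1 ≤ ‖z‖}.indicator fun z => (z ^ 2)⁻¹
  have hκ : Measurable κ :=
    (measurable_id.pow_const 2).inv.indicator (measurableSet_le measurable_const measurable_norm)
  have hψ : Continuous smoothInvSq := (contDiff_smoothInvSq (n := 0)).continuous
  have hq : Integrable fun η : ℂ => M * (3 * weight η ^ 2) :=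
    ((integrable_weight_pow _ (by simp)).const_mul 3).const_mul M
  have hle (η : ℂ) : ‖g (z + η) • (smoothInvSq η - κ η)‖ ≤ M * (3 * weight η ^ 2) := by
    rw [norm_smul]
    exact mul_le_mul (hM _) (norm_smoothInvSq_sub_indicator_le η) (norm_nonneg _)
      ((norm_nonneg _).trans (hM 0))
  have hint : Integrable fun η => g (z + η) • (smoothInvSq η - κ η) :=
    hq.mono' (by fun_prop) (.of_forall hle)
  have hψint : IntegrableOn (fun η => g (z + η) • smoothInvSq η) (Metric.closedBall 0 r) :=
    (by fun_prop : Continuous _).continuousOn.integrableOn_compact (isCompact_closedBall _ _)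
  have hsub (η : ℂ) : g (z + η) • κ η =
      g (z + η) • smoothInvSq η - g (z + η) • (smoothInvSq η - κ η) := by
    rw [← smul_sub, sub_sub_cancel]
  rw [annulusIntegral_eq_setIntegral_indicator, funext hsub,
    integral_sub hψint hint.integrableOn, sub_sub_cancel]
  exact (norm_integral_le_of_norm_le hq.integrableOn (.of_forall hle)).trans
    (setIntegral_le_integral hq (.of_forall fun η => (norm_nonneg _).trans (hle η)))

lemma exists_norm_setIntegral_smoothInvSq_le (hg : Continuous g) (hM : ∀ z, ‖g z‖ ≤ M)
    (ha : ∃ A, ∀ ζ r, 1 ≤ r → ‖annulusIntegral g ζ r‖ ≤ A) :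
    ∃ B, ∀ z r, 1 ≤ r → ‖∫ η in Metric.closedBall 0 r, g (z + η) • smoothInvSq η‖ ≤ B := by
  obtain ⟨A, hA⟩ := ha
  refine ⟨A + ∫ η : ℂ, M * (3 * weight η ^ 2), fun z r hr => ?_⟩
  rw [← add_sub_cancel (annulusIntegral g z r) (∫ η in Metric.closedBall 0 r, _)]
  exact norm_add_le_of_le (hA z r hr)
    (norm_setIntegral_smoothInvSq_sub_annulusIntegral_le hg hM z r)

lemma norm_setIntegral_smoothInvSq_closedBall_sub_le (hg : Continuous g) (hM : ∀ z, ‖g z‖ ≤ M)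
    {z w : ℂ} {r : ℝ} (hr : 0 < r) (hw : 2 * ‖w‖ ≤ r) :
    ‖(∫ η in Metric.closedBall w r, g (z + η) • smoothInvSq η) -
      ∫ η in Metric.closedBall 0 r, g (z + η) • smoothInvSq η‖ ≤ 96 * π * M := by
  have hM0 : 0 ≤ M := (norm_nonneg _).trans (hM 0)
  have hψ : Continuous smoothInvSq := (contDiff_smoothInvSq (n := 0)).continuous
  have hint (x : ℂ) :
      IntegrableOn (fun η => g (z + η) • smoothInvSq η) (Metric.closedBall x r) :=
    (by fun_prop : Continuous _).continuousOn.integrableOn_compact (isCompact_closedBall _ _)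
  have hvol : volume.real (Metric.closedBall (0 : ℂ) (2 * r)) = 4 * r ^ 2 * π := by
    rw [Measure.real, Complex.volume_closedBall, ENNReal.toReal_mul, ENNReal.toReal_pow,
      ENNReal.toReal_ofReal (by positivity), ENNReal.coe_toReal, NNReal.coe_real_pi]
    ring
  have hfar (η : ℂ) (hη : η ∉ Metric.closedBall w r ∩ Metric.closedBall 0 r) : r / 2 ≤ ‖η‖ := by
    by_contra! hlt
    refine hη ⟨?_, ?_⟩
    · rw [mem_closedBall_iff_norm]
      linarith [norm_sub_le η w]
    · rw [mem_closedBall_zero_iff]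
      linarith
  refine (norm_setIntegral_sub_setIntegral_le (C := M * (12 / r ^ 2))
    measurableSet_closedBall measurableSet_closedBall
    (Metric.closedBall_subset_closedBall' (ε₂ := 2 * r) (by rw [dist_zero_right]; linarith))
    (Metric.closedBall_subset_closedBall (by linarith)) measure_closedBall_lt_top.ne
    (hint w) (hint 0) (by positivity) fun η _ hη => ?_).trans_eq ?_
  · have hη' := hfar η hη
    rw [norm_smul]
    refine mul_le_mul (hM _) ((norm_smoothInvSq_le_div (norm_pos_iff.1 (by linarith))).trans ?_)
      (norm_nonneg _) hM0
    calc 3 / ‖η‖ ^ 2 ≤ 3 / (r / 2) ^ 2 := by gcongr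
      _ = 12 / r ^ 2 := by field_simp; norm_num
  · rw [hvol]
    field_simp
    ring

lemma setIntegral_closedBall_smul_smoothInvSq_sub (g : ℂ → ℝ) (z : ℂ) (r : ℝ) :
    ∫ η in Metric.closedBall 0 r, g η • smoothInvSq (z - η) =
      ∫ η in Metric.closedBall (-z) r, g (z + η) • smoothInvSq η := by
  have hball : (z + ·) ⁻¹' Metric.closedBall 0 r = Metric.closedBall (-z) r := by
    simp
  rw [← (measurePreserving_add_left volume z).setIntegral_preimage_emb
    (measurableEmbedding_addLeft z), hball]
  simp [smoothInvSq_neg]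

lemma exists_norm_renormConv_smoothInvSq_le (hg : Continuous g) (hM : ∀ z, ‖g z‖ ≤ M)
    (ha : ∃ A, ∀ ζ r, 1 ≤ r → ‖annulusIntegral g ζ r‖ ≤ A) :
    ∃ B, ∀ z, ‖renormConv volume smoothInvSq g z‖ ≤ B := by
  obtain ⟨B, hB⟩ := exists_norm_setIntegral_smoothInvSq_le hg hM ha
  have hψ : Continuous smoothInvSq := (contDiff_smoothInvSq (n := 0)).continuous
  refine ⟨96 * π * M + B + B, fun z => ?_⟩
  have hlim := (aecover_closedBall (μ := volume) (x := (0 : ℂ))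
    tendsto_id).integral_tendsto_of_countably_generated
    (hasFDerivDecay_smoothInvSq.integrable_smul_sub (by norm_num [finrank_real_complex]) hg
      ⟨M, hM⟩ z)
  refine le_of_tendsto hlim.norm ?_
  filter_upwards [eventually_ge_atTop (2 * ‖z‖ + 1)] with r hr
  have hint (x : ℂ) : IntegrableOn (fun η => g η • smoothInvSq (x - η)) (Metric.closedBall 0 r) :=
    (by fun_prop : Continuous _).continuousOn.integrableOn_compact (isCompact_closedBall _ _)
  have hr1 : 1 ≤ r := by linarith [norm_nonneg z]
  have hz := norm_setIntegral_smoothInvSq_closedBall_sub_le hg hM (z := z) (w := -z) (r := r)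
    (by linarith) (by rw [norm_neg]; linarith)
  have h0 := hint 0
  simp only [zero_sub] at h0
  simp only [smul_sub, id_eq]
  rw [integral_sub (hint z) h0, setIntegral_closedBall_smul_smoothInvSq_sub]
  refine norm_sub_le_of_le ?_ ?_
  · rw [← sub_add_cancel (∫ η in Metric.closedBall (-z) r, _)]
    exact norm_add_le_of_le hz (hB z r hr1)
  · simpa [smoothInvSq_neg] using hB 0 r hr1

lemma renormConv_logHessian (hg : Continuous g) (hM : ∀ z, ‖g z‖ ≤ M) (z : ℂ) :
    renormConv volume logHessian g z =
      (4 * ((∫ η, g η * weight (z - η) ^ 3) - ∫ η, g η * weight (-η) ^ 3)) • innerBilin -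
        (2 : ℝ) • reMul (renormConv volume smoothInvSq g z) := by
  have hq : Integrable fun η : ℂ => weight η ^ 3 := integrable_weight_pow _ (by simp)
  have hgq (z : ℂ) : Integrable fun η => g η * weight (z - η) ^ 3 :=
    (hq.comp_sub_left z).bdd_mul hg.aestronglyMeasurable (.of_forall hM)
  have hψ := hasFDerivDecay_smoothInvSq.integrable_smul_sub (μ := volume)
    (by norm_num [finrank_real_complex]) hg ⟨M, hM⟩ z
  have hq0 := hgq 0
  simp only [zero_sub] at hq0
  rw [renormConv, renormConv, ← integral_sub (hgq z) hq0, ← integral_const_mul,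
    ← integral_smul_const, ← ContinuousLinearMap.integral_comp_comm _ hψ, ← integral_smul,
    ← integral_sub]
  · congr 1 with η v w
    simp only [logHessian, map_smul, map_sub, sub_apply, smul_apply, smul_eq_mul]
    ring
  · exact (((hgq z).sub hq0).const_mul 4).smul_const _
  · exact (reMul.integrable_comp hψ).smul (2 : ℝ)

end AnnulusBound

section LocalPotential

/-- The trace of a real bilinear form on `ℂ`, so that the Laplacian is the trace of the Hessian. -/
noncomputable def bilinTrace : (ℂ →L[ℝ] ℂ →L[ℝ] ℝ) →L[ℝ] ℝ :=
  .apply ℝ ℝ 1 ∘L .apply ℝ (ℂ →L[ℝ] ℝ) 1 + .apply ℝ ℝ I ∘L .apply ℝ (ℂ →L[ℝ] ℝ) I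

lemma bilinTrace_apply (B : ℂ →L[ℝ] ℂ →L[ℝ] ℝ) : bilinTrace B = B 1 1 + B I I := rfl

lemma bilinTrace_innerBilin : bilinTrace innerBilin = 2 := by
  norm_num [bilinTrace_apply, innerBilin_apply]

lemma bilinTrace_reMul (b : ℂ) : bilinTrace (reMul b) = 0 := by
  simp [bilinTrace_apply, reMul_apply, mul_assoc]

lemma laplacian_eq_bilinTrace (P : ℂ → ℝ) (z : ℂ) :
    laplacian P z = bilinTrace (fderiv ℝ (fderiv ℝ P) z) := by
  simp [laplacian, iteratedFDeriv_two_apply, bilinTrace_apply]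

lemma inner_one_mul_add_inner_I_mul (L : ℂ →L[ℝ] ℝ) (w : ℂ) :
    inner ℝ w 1 * L 1 + inner ℝ w I * L I = L w := by
  have hw : w = w.re • (1 : ℂ) + w.im • I := by simp [re_add_im]
  conv_rhs => rw [hw, map_add, map_smul, map_smul]
  simp [Complex.inner]

lemma BoundedSmooth.comp_add_clm {E F G : Type*} [NormedAddCommGroup E] [NormedSpace ℝ E]
    [NormedAddCommGroup F] [NormedSpace ℝ F] [NormedAddCommGroup G] [NormedSpace ℝ G] {f : F → G}
    (hf : BoundedSmooth f) (c : F) (L : E →L[ℝ] F) : BoundedSmooth fun w => f (c + L w) := by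
  have hf' : ContDiff ℝ (⊤ : ℕ∞) fun y => f (c + y) := hf.1.comp (contDiff_const.add contDiff_id)
  refine ⟨hf'.comp L.contDiff, fun k => ?_⟩
  obtain ⟨C, hC⟩ := hf.2 k
  refine ⟨C * ‖L‖ ^ k, fun w => ?_⟩
  have := L.iteratedFDeriv_comp_right hf' w (i := k) (mod_cast le_top)
  rw [Function.comp_def] at this
  rw [this, iteratedFDeriv_comp_add_left']
  refine (ContinuousMultilinearMap.norm_compContinuousLinearMap_le _ _).trans ?_
  simp only [Finset.prod_const, Finset.card_univ, Fintype.card_fin]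
  gcongr
  exact hC _

variable {g : ℂ → ℝ} {n : ℕ}

lemma integral_weight_pow_mul_fderiv_self (hn : 1 < n) (hg : BoundedSmooth g) (z : ℂ) (s : ℝ) :
    2 * n * ∫ w, weight w ^ (n + 1) * fderiv ℝ g (z + s • w) w =
      s * ∫ w, weight w ^ n * bilinTrace (fderiv ℝ (fderiv ℝ g) (z + s • w)) := by
  have hn' : Module.finrank ℝ ℂ < 2 * n := by rw [finrank_real_complex]; omega
  have hf (e : ℂ) : BoundedSmooth fun w => fderiv ℝ g (z + s • w) e :=
    (hg.fderiv.comp_add_clm z (s • .id ℝ ℂ)).clm_comp (.apply ℝ ℝ e)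
  have hf' (e w : ℂ) : fderiv ℝ (fun w => fderiv ℝ g (z + s • w) e) w e =
      s * fderiv ℝ (fderiv ℝ g) (z + s • w) e e := by
    have hline : HasFDerivAt (fun w : ℂ => z + s • w) (s • .id ℝ ℂ) w :=
      ((hasFDerivAt_id w).const_smul s).const_add z
    have h := ((ContinuousLinearMap.apply ℝ ℝ e).hasFDerivAt.comp w
      ((hg.fderiv.differentiable _).hasFDerivAt.comp w hline)).fderiv
    rw [Function.comp_def, Function.comp_def] at h
    simpa using congr($h e)
  have hint (e : ℂ) := integrable_weight_pow_mul_inner_mul volume hn' (hf e).continuous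
    (hf e).exists_norm_le e
  have hint' (e : ℂ) : Integrable fun w =>
      weight w ^ n * fderiv ℝ (fun w => fderiv ℝ g (z + s • w) e) w e :=
    have := (hf e).fderiv.clm_comp (.apply ℝ ℝ e)
    integrable_weight_pow_mul volume hn' this.continuous this.exists_norm_le
  have hsplit (w : ℂ) : weight w ^ (n + 1) * fderiv ℝ g (z + s • w) w =
      weight w ^ (n + 1) * (inner ℝ w 1 * fderiv ℝ g (z + s • w) 1) +
        weight w ^ (n + 1) * (inner ℝ w I * fderiv ℝ g (z + s • w) I) := by
    rw [← mul_add, inner_one_mul_add_inner_I_mul]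
  rw [funext hsplit, integral_add (hint 1) (hint I), mul_add,
    integral_weight_pow_mul_inner_mul volume hn' (hf 1) 1,
    integral_weight_pow_mul_inner_mul volume hn' (hf I) I,
    ← integral_add (hint' 1) (hint' I), ← integral_const_mul]
  congr 1 with w
  rw [hf', hf', bilinTrace_apply]
  ring

lemma hasDerivAt_integral_weight_pow_mul_comp_add_smul (hn : 1 < n) (hg : BoundedSmooth g)
    (z : ℂ) (s : ℝ) :
    HasDerivAt (fun s : ℝ => ∫ w, weight w ^ (n + 1) * g (z + s • w))
      (∫ w, weight w ^ (n + 1) * fderiv ℝ g (z + s • w) w) s := by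
  have hn' : Module.finrank ℝ ℂ < 2 * n := by rw [finrank_real_complex]; omega
  have hq : Continuous (weight : ℂ → ℝ) := (contDiff_weight (n := 0)).continuous
  have hcg := hg.continuous
  have hcg' := hg.fderiv.continuous
  obtain ⟨B, hB⟩ := hg.exists_norm_le
  obtain ⟨C, hC⟩ := hg.fderiv.exists_norm_le
  refine (hasDerivAt_integral_of_dominated_loc_of_deriv_le
    (F := fun s w => weight w ^ (n + 1) * g (z + s • w))
    (F' := fun s w => weight w ^ (n + 1) * fderiv ℝ g (z + s • w) w)
    (bound := fun w => weight w ^ n * C) Filter.univ_mem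
    (.of_forall fun s => (by fun_prop : Continuous _).aestronglyMeasurable)
    (integrable_weight_pow_mul volume (by omega) (by fun_prop) ⟨B, fun w => hB _⟩)
    (by fun_prop : Continuous _).aestronglyMeasurable
    (.of_forall fun w s _ => ?_) ((integrable_weight_pow volume hn').mul_const C)
    (.of_forall fun w s _ => ?_)).2
  · have hqw := weight_pos w
    calc ‖weight w ^ (n + 1) * fderiv ℝ g (z + s • w) w‖
        ≤ weight w ^ (n + 1) * (C * ‖w‖) := by
          rw [norm_mul, Real.norm_of_nonneg (by positivity)]
          gcongr
          exact (fderiv ℝ g _).le_of_opNorm_le (hC _) w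
      _ = weight w ^ n * C * (weight w * ‖w‖) := by ring
      _ ≤ weight w ^ n * C := mul_le_of_le_one_right
          (mul_nonneg (by positivity) ((norm_nonneg _).trans (hC 0))) (weight_mul_norm_le_one w)
  · have hline : HasDerivAt (fun s : ℝ => z + s • w) w s := by
      simpa using ((hasDerivAt_id s).smul_const w).const_add z
    exact ((hg.differentiable _).hasFDerivAt.comp_hasDerivAt s hline).const_mul _

/-- A bounded function whose Laplacian at `z` is the difference between `(∫ q³) g(z)` and the
average `∫ q³(w) g(z + w) dw`, where `q = weight`. The formula comes from writing that difference
as `-∫₀¹ d/ds ∫ q³(w) g(z + s w) dw ds` and integrating by parts in `w`, which turns the integrand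
into `-(s / 4) ∫ q²(w) Δg(z + s w) dw`. -/
noncomputable def localPotential (g : ℂ → ℝ) (z : ℂ) : ℝ :=
  ∫ p : ℝ × ℂ, (-(1 / 4) * (p.1 * weight p.2 ^ 2)) • g (z + p.1 • p.2)
    ∂(volume.restrict (Set.Ioc 0 1)).prod volume

lemma integrable_mul_weight_pow_two :
    Integrable (fun p : ℝ × ℂ => -(1 / 4) * (p.1 * weight p.2 ^ 2))
      ((volume.restrict (Set.Ioc 0 1)).prod volume) := by
  have hid : IntegrableOn (fun s : ℝ => s) (Set.Ioc 0 1) :=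
    (continuous_id.integrableOn_Icc).mono_set Set.Ioc_subset_Icc_self
  exact (hid.mul_prod (integrable_weight_pow volume (by simp))).const_mul _

lemma boundedSmooth_localPotential (hg : BoundedSmooth g) : BoundedSmooth (localPotential g) :=
  hg.integral_smul_comp_add integrable_mul_weight_pow_two (by fun_prop)

lemma laplacian_localPotential_eq_integral (hg : BoundedSmooth g) (z : ℂ) :
    laplacian (localPotential g) z = ∫ p : ℝ × ℂ, (-(1 / 4) * (p.1 * weight p.2 ^ 2)) •
      bilinTrace (fderiv ℝ (fderiv ℝ g) (z + p.1 • p.2))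
        ∂(volume.restrict (Set.Ioc 0 1)).prod volume := by
  have hτ : AEStronglyMeasurable (fun p : ℝ × ℂ => p.1 • p.2)
    ((volume.restrict (Set.Ioc 0 1)).prod volume) := by fun_prop
  have h1 : fderiv ℝ (localPotential g) = fun z => _ := funext fun z =>
    (hg.hasFDerivAt_integral_smul_comp_add integrable_mul_weight_pow_two hτ z).fderiv
  rw [laplacian_eq_bilinTrace, h1, (hg.fderiv.hasFDerivAt_integral_smul_comp_add
    integrable_mul_weight_pow_two hτ z).fderiv, ← bilinTrace.integral_comp_comm]
  · simp only [map_smul]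
  · exact integrable_smul_comp_add integrable_mul_weight_pow_two hτ hg.fderiv.fderiv.continuous
      hg.fderiv.fderiv.exists_norm_le z

lemma laplacian_localPotential (hg : BoundedSmooth g) (z : ℂ) :
    laplacian (localPotential g) z =
      (∫ w : ℂ, weight w ^ 3) * g z - ∫ w, weight w ^ 3 * g (z + w) := by
  have hint := integrable_smul_comp_add integrable_mul_weight_pow_two
    (τ := fun p => p.1 • p.2) (by fun_prop)
    (hg.fderiv.fderiv.clm_comp bilinTrace).continuous
    (hg.fderiv.fderiv.clm_comp bilinTrace).exists_norm_le z
  have hderiv (s : ℝ) : HasDerivAt (fun s : ℝ => -∫ w, weight w ^ 3 * g (z + s • w))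
      (∫ w, (-(1 / 4) * (s * weight w ^ 2)) •
        bilinTrace (fderiv ℝ (fderiv ℝ g) (z + s • w))) s := by
    refine (hasDerivAt_integral_weight_pow_mul_comp_add_smul one_lt_two hg z s).neg.congr_deriv ?_
    have := integral_weight_pow_mul_fderiv_self one_lt_two hg z s
    simp only [smul_eq_mul, mul_assoc, integral_const_mul]
    push_cast at this
    linarith
  rw [laplacian_localPotential_eq_integral hg, integral_prod _ hint,
    ← intervalIntegral.integral_of_le zero_le_one, intervalIntegral.integral_eq_sub_of_hasDerivAt
      (fun s _ => hderiv s) ((intervalIntegrable_iff_integrableOn_Ioc_of_le zero_le_one).2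
        hint.integral_prod_left)]
  simp only [one_smul, zero_smul, add_zero, integral_mul_const]
  ring

end LocalPotential

section SmoothPotential

/-- `P` is a smooth solution of `ΔP = f` all of whose derivatives of order at least two are
bounded. -/
structure IsPotential (P f : ℂ → ℝ) : Prop where
  contDiff : ContDiff ℝ (⊤ : ℕ∞) P
  laplacian_eq : laplacian P = f
  boundedSmooth_hessian : BoundedSmooth (fderiv ℝ (fderiv ℝ P))

/-- Translate a potential to `ζ` and remove its first order Taylor polynomial, which changes
neither the (translated) Laplacian nor the second derivatives. -/
noncomputable def recentre (P : ℂ → ℝ) (ζ z : ℂ) : ℝ := P (ζ + z) - P ζ - fderiv ℝ P ζ z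

lemma recentre_zero (P : ℂ → ℝ) (ζ : ℂ) : recentre P ζ 0 = 0 := by simp [recentre]

namespace IsPotential

variable {P Q f g : ℂ → ℝ}

lemma of_hasFDerivAt {P' : ℂ → ℂ →L[ℝ] ℝ} {P'' : ℂ → ℂ →L[ℝ] ℂ →L[ℝ] ℝ}
    (hP : ∀ z, HasFDerivAt P (P' z) z) (hP' : ∀ z, HasFDerivAt P' (P'' z) z)
    (hP'' : BoundedSmooth P'') : IsPotential P fun z => bilinTrace (P'' z) := by
  obtain rfl : fderiv ℝ P = P' := funext fun z => (hP z).fderiv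
  obtain rfl : fderiv ℝ (fderiv ℝ P) = P'' := funext fun z => (hP' z).fderiv
  exact ⟨contDiff_infty_iff_fderiv.2 ⟨fun z => (hP z).differentiableAt,
    contDiff_infty_iff_fderiv.2 ⟨fun z => (hP' z).differentiableAt, hP''.1⟩⟩,
    funext (laplacian_eq_bilinTrace P), hP''⟩

lemma hasFDerivAt (hP : IsPotential P f) (z : ℂ) : HasFDerivAt P (fderiv ℝ P z) z :=
  (hP.contDiff.differentiable (by simp) z).hasFDerivAt

lemma hasFDerivAt_fderiv (hP : IsPotential P f) (z : ℂ) :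
    HasFDerivAt (fderiv ℝ P) (fderiv ℝ (fderiv ℝ P) z) z :=
  ((hP.contDiff.fderiv_right (m := (⊤ : ℕ∞)) (by simp)).differentiable (by simp) z).hasFDerivAt

lemma bilinTrace_fderiv_fderiv (hP : IsPotential P f) (z : ℂ) :
    bilinTrace (fderiv ℝ (fderiv ℝ P) z) = f z := by
  rw [← laplacian_eq_bilinTrace, hP.laplacian_eq]

protected lemma add (hP : IsPotential P f) (hQ : IsPotential Q g) :
    IsPotential (P + Q) (f + g) := by
  convert of_hasFDerivAt (fun z => (hP.hasFDerivAt z).add (hQ.hasFDerivAt z))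
    (fun z => (hP.hasFDerivAt_fderiv z).add (hQ.hasFDerivAt_fderiv z))
    (hP.boundedSmooth_hessian.add hQ.boundedSmooth_hessian) using 2 with z
  simp [hP.bilinTrace_fderiv_fderiv, hQ.bilinTrace_fderiv_fderiv]

protected lemma const_smul (c : ℝ) (hP : IsPotential P f) : IsPotential (c • P) (c • f) := by
  convert of_hasFDerivAt (fun z => (hP.hasFDerivAt z).const_smul c)
    (fun z => (hP.hasFDerivAt_fderiv z).const_smul c)
    (hP.boundedSmooth_hessian.const_smul c) using 2 with z
  simp [hP.bilinTrace_fderiv_fderiv]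

lemma hasFDerivAt_recentre (hP : IsPotential P f) (ζ z : ℂ) :
    HasFDerivAt (recentre P ζ) (fderiv ℝ P (ζ + z) - fderiv ℝ P ζ) z :=
  (((hasFDerivAt_comp_add_left ζ).2 (hP.hasFDerivAt (ζ + z))).sub_const (P ζ)).sub
    (fderiv ℝ P ζ).hasFDerivAt

lemma hasFDerivAt_fderiv_recentre (hP : IsPotential P f) (ζ z : ℂ) :
    HasFDerivAt (fun z => fderiv ℝ P (ζ + z) - fderiv ℝ P ζ) (fderiv ℝ (fderiv ℝ P) (ζ + z)) z :=
  ((hasFDerivAt_comp_add_left ζ).2 (hP.hasFDerivAt_fderiv (ζ + z))).sub_const _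

protected lemma recentre (hP : IsPotential P f) (ζ : ℂ) :
    IsPotential (recentre P ζ) fun z => f (ζ + z) := by
  convert of_hasFDerivAt (hP.hasFDerivAt_recentre ζ) (hP.hasFDerivAt_fderiv_recentre ζ)
    (hP.boundedSmooth_hessian.comp_add_clm ζ (.id ℝ ℂ)) using 2 with z
  exact (hP.bilinTrace_fderiv_fderiv _).symm

lemma exists_forall_norm_fderiv_recentre_le (hP : IsPotential P f) :
    ∃ A, ∀ ζ z, ‖fderiv ℝ (recentre P ζ) z‖ ≤ A * ‖z‖ := by
  obtain ⟨A, hA⟩ := hP.boundedSmooth_hessian.exists_norm_le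
  refine ⟨A, fun ζ z => ?_⟩
  rw [(hP.hasFDerivAt_recentre ζ z).fderiv]
  simpa using convex_univ.norm_image_sub_le_of_norm_fderiv_le
    (fun z _ => (hP.hasFDerivAt_fderiv z).differentiableAt) (fun z _ => hA z) (Set.mem_univ ζ)
    (Set.mem_univ (ζ + z))

lemma exists_forall_norm_iteratedFDeriv_recentre_le (hP : IsPotential P f) {k : ℕ} (hk : 2 ≤ k) :
    ∃ A, ∀ ζ z, ‖iteratedFDeriv ℝ k (recentre P ζ) z‖ ≤ A := by
  obtain ⟨k, rfl⟩ := Nat.exists_eq_add_of_le' hk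
  obtain ⟨A, hA⟩ := hP.boundedSmooth_hessian.2 k
  refine ⟨A, fun ζ z => ?_⟩
  rw [← norm_iteratedFDeriv_fderiv, ← norm_iteratedFDeriv_fderiv,
    funext fun z => (hP.hasFDerivAt_recentre ζ z).fderiv,
    funext fun z => (hP.hasFDerivAt_fderiv_recentre ζ z).fderiv, iteratedFDeriv_comp_add_left']
  exact hA _

end IsPotential

lemma BoundedSmooth.isPotential {P : ℂ → ℝ} (hP : BoundedSmooth P) : IsPotential P (laplacian P) :=
  ⟨hP.1, rfl, hP.fderiv.fderiv⟩

variable {g : ℂ → ℝ}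

lemma renormConv_logHessian_add (hg : BoundedSmooth g) (z : ℂ) :
    renormConv volume logHessian g z + (4 * ∫ η, g η * weight (-η) ^ 3) • innerBilin =
      (4 * ∫ η, g η * weight (z - η) ^ 3) • innerBilin -
        (2 : ℝ) • reMul (renormConv volume smoothInvSq g z) := by
  obtain ⟨M, hM⟩ := hg.exists_norm_le
  rw [renormConv_logHessian hg.continuous hM]
  module

lemma boundedSmooth_renormConv_logHessian_add (hg : BoundedSmooth g)
    (ha : ∃ A, ∀ ζ r, 1 ≤ r → ‖annulusIntegral g ζ r‖ ≤ A) :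
    BoundedSmooth fun z =>
      renormConv volume logHessian g z + (4 * ∫ η, g η * weight (-η) ^ 3) • innerBilin := by
  obtain ⟨M, hM⟩ := hg.exists_norm_le
  have hconv : BoundedSmooth fun z => ∫ η, g η * weight (z - η) ^ 3 :=
    hg.integral_smul_comp_sub (integrable_weight_pow volume (by simp))
  have hinvSq : BoundedSmooth (renormConv volume smoothInvSq g) :=
    .renormConv (by norm_num [finrank_real_complex]) hasFDerivDecay_smoothInvSq hg
      (exists_norm_renormConv_smoothInvSq_le hg.continuous hM ha)
  simp_rw [renormConv_logHessian_add hg]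
  convert (hconv.clm_comp (.toSpanSingleton ℝ ((4 : ℝ) • innerBilin))).add
    (hinvSq.clm_comp ((-2 : ℝ) • reMul)) using 2 with z
  simp only [Pi.add_apply, ContinuousLinearMap.toSpanSingleton_apply, smul_apply]
  module

lemma exists_isPotential_convolution (hg : BoundedSmooth g)
    (ha : ∃ A, ∀ ζ r, 1 ≤ r → ‖annulusIntegral g ζ r‖ ≤ A) :
    ∃ P, IsPotential P fun z => 8 * ∫ η, g η * weight (z - η) ^ 3 := by
  obtain ⟨P, P', hP, hP'⟩ := HasFDerivDecay.exists_hasHessian_renormConv (μ := volume)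
    (by norm_num [finrank_real_complex]) hasFDerivAt_logKernel hasFDerivAt_fderiv_logKernel
    hasFDerivDecay_logHessian hg.continuous hg.exists_norm_le
  have hQ (z : ℂ) : HasFDerivAt (fun z => P z + 2 * (∫ η, g η * weight (-η) ^ 3) * ‖z‖ ^ 2)
      (P' z + (4 * ∫ η, g η * weight (-η) ^ 3) • innerBilin z) z := by
    refine ((hP z).add ((hasStrictFDerivAt_norm_sq z).hasFDerivAt.const_mul _)).congr_fderiv ?_
    ext v
    simp only [add_apply, smul_apply, coe_innerSL_apply, innerBilin_apply, smul_eq_mul,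
      nsmul_eq_mul]
    push_cast
    ring
  refine ⟨fun z => P z + 2 * (∫ η, g η * weight (-η) ^ 3) * ‖z‖ ^ 2, ?_⟩
  convert IsPotential.of_hasFDerivAt hQ
    (fun z => (hP' z).add (innerBilin.hasFDerivAt.fun_const_smul _))
    (boundedSmooth_renormConv_logHessian_add hg ha) using 2 with z
  simp only [renormConv_logHessian_add hg, map_sub, map_smul, bilinTrace_innerBilin,
    bilinTrace_reMul, smul_eq_mul]
  ring

lemma integral_weight_pow_three_pos : 0 < ∫ w : ℂ, weight w ^ 3 := by
  rw [integral_pos_iff_support_of_nonneg (fun w => pow_nonneg (weight_pos w).le 3)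
    (integrable_weight_pow volume (by simp)),
    Function.support_eq_univ fun w => (pow_pos (weight_pos w) 3).ne']
  simp

theorem exists_isPotential (hg : BoundedSmooth g)
    (ha : ∃ A, ∀ ζ r, 1 ≤ r → ‖annulusIntegral g ζ r‖ ≤ A) : ∃ P, IsPotential P g := by
  obtain ⟨P, hP⟩ := exists_isPotential_convolution hg ha
  have hsubst (z : ℂ) :
      ∫ η, g η * weight (z - η) ^ 3 = ∫ w, weight w ^ 3 * g (z + w) := by
    rw [← integral_add_left_eq_self _ z]
    simp only [sub_add_cancel_left, weight_neg, mul_comm]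
  refine ⟨(∫ w : ℂ, weight w ^ 3)⁻¹ • (localPotential g + (1 / 8 : ℝ) • P), ?_⟩
  convert ((boundedSmooth_localPotential hg).isPotential.add
    (hP.const_smul (1 / 8))).const_smul (∫ w : ℂ, weight w ^ 3)⁻¹ using 1
  ext z
  simp only [Pi.smul_apply, Pi.add_apply, laplacian_localPotential hg, hsubst, smul_eq_mul]
  field_simp [integral_weight_pow_three_pos.ne']
  ring

end SmoothPotential

section Green

open scoped ComplexConjugate Real

variable {E : Type*} [NormedAddCommGroup E] [NormedSpace ℂ E]

/-- Twice the Wirtinger derivative `∂u/∂z̄`. -/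
noncomputable def dbar (u : ℂ → E) (z : ℂ) : E := fderiv ℝ u z 1 + I • fderiv ℝ u z I

lemma apply_add_I_smul_apply_I_mul (L : ℂ →L[ℝ] E) (a : ℂ) :
    L a + I • L (I * a) = conj a • (L 1 + I • L I) := by
  have ha : a = a.re • (1 : ℂ) + a.im • I := by simp [re_add_im]
  have hIa : I * a = a.re • I - a.im • (1 : ℂ) := by
    apply Complex.ext <;> simp
  have hconj : conj a = a.re - a.im * I := by apply Complex.ext <;> simp
  rw [hIa, map_sub, map_smul, map_smul, hconj]
  nth_rw 1 [ha]
  rw [map_add, map_smul, map_smul]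
  simp only [← coe_smul]
  match_scalars
  · ring
  · linear_combination (a.im : ℂ) * I_sq

lemma dbar_comp {u : ℂ → E} {f : ℂ → ℂ} {f' z : ℂ} (hu : DifferentiableAt ℝ u (f z))
    (hf : HasDerivAt f f' z) : dbar (fun z => u (f z)) z = conj f' • dbar u (f z) := by
  have := (hu.hasFDerivAt.comp z hf.complexToReal_fderiv).fderiv
  rw [Function.comp_def] at this
  simp only [dbar, this, ContinuousLinearMap.comp_apply, smul_apply, one_apply_eq_self,
    smul_eq_mul, mul_comm f', one_mul, apply_add_I_smul_apply_I_mul]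

lemma dbar_smul {u : ℂ → E} {f : ℂ → ℂ} {z : ℂ} (hf : DifferentiableAt ℂ f z)
    (hu : DifferentiableAt ℝ u z) : dbar (fun z => f z • u z) z = f z • dbar u z := by
  have := (hf.hasDerivAt.complexToReal_fderiv.smul hu.hasFDerivAt).fderiv
  simp only [dbar, Pi.smul_def'] at this ⊢
  rw [this]
  simp only [add_apply, smul_apply, ContinuousLinearMap.smulRight_apply, one_apply_eq_self]
  match_scalars
  · ring
  · linear_combination deriv f z * I_sq
  · ring

lemma setIntegral_reProdIm {s t : Set ℝ} {f : ℂ → E} (hf : IntegrableOn f (s ×ℂ t)) :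
    ∫ z in s ×ℂ t, f z = ∫ x in s, ∫ y in t, f (x + y * I) := by
  have hpre : measurableEquivRealProd.symm ⁻¹' (s ×ℂ t) = s ×ˢ t := rfl
  have hvol := volume_preserving_equiv_real_prod.symm measurableEquivRealProd
  have hemb := measurableEquivRealProd.symm.measurableEmbedding
  rw [← hvol.setIntegral_preimage_emb hemb, hpre, Measure.volume_eq_prod, setIntegral_prod]
  · simp [mk_eq_add_mul_I]
  · rw [← hvol.integrableOn_comp_preimage hemb, hpre] at hf
    exact hf

lemma setIntegral_annulus_eq_setIntegral_exp {a b : ℝ} (ha : 0 < a) (hb : 0 < b)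
    (f : ℂ → E) :
    ∫ η in {η : ℂ | a ≤ ‖η‖ ∧ ‖η‖ ≤ b}, f η =
      ∫ w in Set.Icc (Real.log a) (Real.log b) ×ℂ Set.Ioc (-π) π, ‖exp w‖ ^ 2 • f (exp w) := by
  have himage : exp '' (Set.Icc (Real.log a) (Real.log b) ×ℂ Set.Ioc (-π) π) =
      {η : ℂ | a ≤ ‖η‖ ∧ ‖η‖ ≤ b} := by
    ext η
    constructor
    · rintro ⟨w, ⟨⟨hw, hw'⟩, -⟩, rfl⟩
      simpa [norm_exp, ← Real.log_le_iff_le_exp ha, ← Real.le_log_iff_exp_le hb] using ⟨hw, hw'⟩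
    · rintro ⟨hη, hη'⟩
      have h0 : 0 < ‖η‖ := ha.trans_le hη
      refine ⟨log η, ⟨⟨?_, ?_⟩, ?_⟩, exp_log (norm_pos_iff.1 h0)⟩
      · simpa [log_re] using Real.log_le_log ha hη
      · simpa [log_re] using Real.log_le_log h0 hη'
      · simpa [log_im] using arg_mem_Ioc η
  have hinj : Set.InjOn exp (Set.Icc (Real.log a) (Real.log b) ×ℂ Set.Ioc (-π) π) :=
    fun w hw w' hw' => exp_inj_of_neg_pi_lt_of_le_pi hw.2.1 hw.2.2 hw'.2.1 hw'.2.2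
  have hmeas : MeasurableSet (Set.Icc (Real.log a) (Real.log b) ×ℂ Set.Ioc (-π) π) :=
    (measurable_re measurableSet_Icc).inter (measurable_im measurableSet_Ioc)
  rw [← himage, integral_image_eq_integral_abs_det_fderiv_smul volume hmeas
    (fun w _ => (hasDerivAt_exp w).complexToReal_fderiv.hasFDerivWithinAt) hinj]
  congr! 3 with w
  have hdet : (exp w • (1 : ℂ →L[ℝ] ℂ)).det = ‖exp w‖ ^ 2 := by
    rw [← normSq_eq_norm_sq, ← Algebra.norm_complex_apply, Algebra.norm_apply]
    rfl
  rw [hdet, abs_of_nonneg (sq_nonneg _)]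

lemma integral_dbar_of_periodic {u : ℂ → E} {a b : ℝ} (hab : a ≤ b)
    (hu : Differentiable ℝ u) (hu' : Continuous (dbar u)) (hp : ∀ z, u (z + 2 * π * I) = u z) :
    ∫ z in Set.Icc a b ×ℂ Set.Ioc (-π) π, dbar u z =
      ∫ y in -π..π, (u (b + y * I) - u (a + y * I)) := by
  have hpi : -π ≤ π := by linarith [Real.pi_pos]
  have hint : IntegrableOn (dbar u) (Set.Icc a b ×ℂ Set.Icc (-π) π) :=
    hu'.continuousOn.integrableOn_compact (isCompact_Icc.reProdIm isCompact_Icc)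
  have hsides (x : ℝ) : u (x + (π : ℝ) * I) = u (x + (-π : ℝ) * I) := by
    rw [← hp (x + (-π : ℝ) * I)]
    congr 1
    push_cast
    ring
  have hdbar (z : ℂ) : I • fderiv ℝ u z 1 - fderiv ℝ u z I = I • dbar u z := by
    rw [dbar, smul_add, smul_smul, I_mul_I, neg_one_smul, sub_eq_add_neg]
  have hrect := integral_boundary_rect_of_differentiableOn_real u ⟨a, -π⟩ ⟨b, π⟩
    hu.differentiableOn
    (by simpa only [IntegrableOn, hdbar, Set.uIcc_of_le hab, Set.uIcc_of_le hpi] using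
      hint.fun_smul I)
  simp only [hdbar, intervalIntegral.integral_smul, hsides, sub_self, zero_add] at hrect
  rw [← smul_sub] at hrect
  have hside (c : ℝ) : IntervalIntegrable (fun y : ℝ => u (c + y * I)) volume (-π) π :=
    (hu.continuous.comp (by fun_prop)).intervalIntegrable _ _
  rw [setIntegral_reProdIm (hint.mono_set
      (reProdIm_subset_iff.2 (Set.prod_mono le_rfl Set.Ioc_subset_Icc_self))),
    intervalIntegral.integral_sub (hside b) (hside a), smul_right_injective E I_ne_zero hrect]
  simp only [intervalIntegral.integral_of_le hab, intervalIntegral.integral_of_le hpi,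
    integral_Icc_eq_integral_Ioc]

theorem integral_annulus_dbar {u : ℂ → E} {a b : ℝ} (ha : 0 < a) (hab : a ≤ b)
    (hu : ∀ z ≠ 0, DifferentiableAt ℝ u z) (hu' : ContinuousOn (dbar u) {0}ᶜ) :
    ∫ η in {η : ℂ | a ≤ ‖η‖ ∧ ‖η‖ ≤ b}, η⁻¹ • dbar u η =
      ∫ y in -π..π, (u (circleMap 0 b y) - u (circleMap 0 a y)) := by
  have hdbar (w : ℂ) : ‖exp w‖ ^ 2 • (exp w)⁻¹ • dbar u (exp w) = dbar (fun w => u (exp w)) w := by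
    rw [dbar_comp (hu _ (exp_ne_zero w)) (hasDerivAt_exp w), ← coe_smul, smul_smul]
    push_cast
    rw [← conj_mul', mul_inv_cancel_right₀ (exp_ne_zero w)]
  have hexp {c : ℝ} (hc : 0 < c) (y : ℝ) : exp (Real.log c + y * I) = circleMap 0 c y := by
    rw [exp_add, ← ofReal_exp, Real.exp_log hc, circleMap_zero]
  have hb := ha.trans_le hab
  simp only [setIntegral_annulus_eq_setIntegral_exp ha hb, hdbar, ← hexp ha, ← hexp hb]
  refine integral_dbar_of_periodic (Real.log_le_log ha hab) (fun w => ?_) ?_ (fun w => ?_)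
  · exact (hu _ (exp_ne_zero w)).comp w (hasDerivAt_exp w).complexToReal_fderiv.differentiableAt
  · refine Continuous.congr ?_ hdbar
    exact (by fun_prop : Continuous fun w => ‖exp w‖ ^ 2).smul
      ((continuous_exp.inv₀ exp_ne_zero).smul (hu'.comp_continuous continuous_exp exp_ne_zero))
  · rw [exp_periodic w]

end Green

section PotentialBound

open scoped Real

variable {P : ℂ → ℝ}

/-- Twice the Wirtinger derivative `∂P/∂z`. -/
noncomputable def wirtinger (P : ℂ → ℝ) (z : ℂ) : ℂ := fderiv ℝ P z 1 - I * fderiv ℝ P z I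

lemma norm_wirtinger_le (P : ℂ → ℝ) (z : ℂ) : ‖wirtinger P z‖ ≤ 2 * ‖fderiv ℝ P z‖ := by
  have h1 := (fderiv ℝ P z).le_opNorm 1
  have hI := (fderiv ℝ P z).le_opNorm I
  rw [norm_one, mul_one] at h1
  rw [norm_I, mul_one] at hI
  calc ‖wirtinger P z‖ ≤ ‖fderiv ℝ P z 1‖ + ‖fderiv ℝ P z I‖ := by
        simpa [wirtinger] using norm_sub_le (fderiv ℝ P z 1 : ℂ) (I * fderiv ℝ P z I)
    _ ≤ 2 * ‖fderiv ℝ P z‖ := by linarith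

lemma differentiable_wirtinger (hP : ContDiff ℝ 2 P) : Differentiable ℝ (wirtinger P) := by
  have := (hP.fderiv_right (m := 1) le_rfl).differentiable one_ne_zero
  unfold wirtinger
  fun_prop

lemma dbar_wirtinger (hP : ContDiff ℝ 2 P) (z : ℂ) : dbar (wirtinger P) z = laplacian P z := by
  have h : HasFDerivAt (fderiv ℝ P) (fderiv ℝ (fderiv ℝ P) z) z :=
    ((hP.fderiv_right (m := 1) le_rfl).differentiable one_ne_zero z).hasFDerivAt
  have hv (v : ℂ) : HasFDerivAt (fun z => ((fderiv ℝ P z v : ℝ) : ℂ)) _ z :=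
    ofRealCLM.hasFDerivAt.comp z (h.clm_apply (hasFDerivAt_const v z))
  have hsymm := second_derivative_symmetric
    (fun z => (hP.differentiable two_ne_zero z).hasFDerivAt) h 1 I
  have hW : HasFDerivAt (wirtinger P) _ z := (hv 1).sub ((hv I).const_mul I)
  rw [laplacian_eq_bilinTrace, bilinTrace_apply, dbar, hW.fderiv]
  simp only [ContinuousLinearMap.comp_zero, zero_add, sub_apply, ContinuousLinearMap.comp_apply,
    ContinuousLinearMap.flip_apply, ofRealCLM_apply, smul_apply, hsymm, smul_eq_mul, ofReal_add]
  linear_combination (-(fderiv ℝ (fderiv ℝ P) z I I : ℂ)) * I_sq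

lemma continuous_laplacian (hP : ContDiff ℝ 2 P) : Continuous (laplacian P) := by
  have := (hP.fderiv_right (m := 1) le_rfl).continuous_fderiv one_ne_zero
  simp only [funext (laplacian_eq_bilinTrace P)]
  fun_prop

theorem norm_annulusIntegral_le {h : ℂ → ℝ} {A r : ℝ} {ζ : ℂ} (hP : ContDiff ℝ 2 P)
    (hΔ : ∀ z, laplacian P z = h (ζ + z)) (hA : ∀ z, ‖fderiv ℝ P z‖ ≤ A * ‖z‖) (hr : 1 ≤ r) :
    ‖annulusIntegral h ζ r‖ ≤ 8 * π * A := by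
  have hW := differentiable_wirtinger hP
  have hdbar (η : ℂ) (hη : η ≠ 0) :
      dbar (fun η => η⁻¹ • wirtinger P η) η = η⁻¹ • (laplacian P η : ℂ) := by
    rw [dbar_smul (differentiableAt_inv hη) (hW η), dbar_wirtinger hP]
  have hgreen : annulusIntegral h ζ r =
      ∫ y in -π..π, ((circleMap 0 r y)⁻¹ • wirtinger P (circleMap 0 r y) -
        (circleMap 0 1 y)⁻¹ • wirtinger P (circleMap 0 1 y)) := by
    rw [← integral_annulus_dbar one_pos hr (u := fun η => η⁻¹ • wirtinger P η)
      (fun η hη => (hasDerivAt_inv hη).complexToReal_fderiv.differentiableAt.smul (hW η))]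
    · refine setIntegral_congr_fun (by measurability) fun η hη => ?_
      have hη0 : η ≠ 0 := norm_pos_iff.1 (one_pos.trans_le hη.1)
      change (h (ζ + η) : ℂ) / η ^ 2 = η⁻¹ • dbar (fun η => η⁻¹ • wirtinger P η) η
      rw [hdbar η hη0, hΔ, smul_eq_mul, smul_eq_mul]
      field_simp
    · have := continuous_laplacian hP
      exact ((continuousOn_inv₀).smul (by fun_prop)).congr hdbar
  have hle {c : ℝ} (hc : 1 ≤ c) (y : ℝ) :
      ‖(circleMap 0 c y)⁻¹ • wirtinger P (circleMap 0 c y)‖ ≤ 2 * A := by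
    have hc0 : 0 < c := by linarith
    have := norm_wirtinger_le P (circleMap 0 c y)
    have := hA (circleMap 0 c y)
    simp only [norm_circleMap_zero, abs_of_pos hc0] at this
    rw [norm_smul, norm_inv, norm_circleMap_zero, abs_of_pos hc0, inv_mul_le_iff₀ hc0]
    linarith
  rw [hgreen]
  refine (intervalIntegral.norm_integral_le_of_norm_le_const
    fun y _ => norm_sub_le_of_le (hle hr y) (hle le_rfl y)).trans_eq ?_
  rw [abs_of_pos (by linarith [Real.pi_pos])]
  ring

end PotentialBound

theorem exists_normalized_potentials {h : ℂ → ℝ} (hh : BoundedSmooth h)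
    (ha : ∃ A, ∀ ζ r, 1 ≤ r → ‖annulusIntegral h ζ r‖ ≤ A) :
    ∃ A : ℕ → ℝ, ∀ ζ : ℂ, ∃ P : ℂ → ℝ, ContDiff ℝ (⊤ : ℕ∞) P ∧ P 0 = 0 ∧
      (∀ z, laplacian P z = h (ζ + z)) ∧ (∀ z : ℂ, ‖fderiv ℝ P z‖ ≤ A 1 * ‖z‖) ∧
      ∀ k : ℕ, 2 ≤ k → ∀ z : ℂ, ‖iteratedFDeriv ℝ k P z‖ ≤ A k := by
  obtain ⟨P, hP⟩ := exists_isPotential hh ha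
  obtain ⟨A₁, hA₁⟩ := hP.exists_forall_norm_fderiv_recentre_le
  choose! A hA using fun k (hk : 2 ≤ k) => hP.exists_forall_norm_iteratedFDeriv_recentre_le hk
  refine ⟨Function.update A 1 A₁, fun ζ => ⟨recentre P ζ, (hP.recentre ζ).contDiff,
    recentre_zero P ζ, congr_fun (hP.recentre ζ).laplacian_eq, by simpa using hA₁ ζ,
    fun k hk => ?_⟩⟩
  rw [Function.update_of_ne (by omega)]
  exact hA k hk ζ

theorem statement0_general (h : ℂ → ℝ) (hsmooth : ContDiff ℝ (⊤ : ℕ∞) h)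
    (hCk : ∀ k : ℕ, ∃ M : ℝ, ∀ z : ℂ, ‖iteratedFDeriv ℝ k h z‖ ≤ M) :
    (∃ A₀ : ℝ, ∀ ζ : ℂ, ∀ r : ℝ, 1 ≤ r →
        ‖∫ η in {η : ℂ | 1 ≤ ‖η‖ ∧ ‖η‖ ≤ r}, (h (ζ + η) : ℂ) / η ^ 2‖ ≤ A₀) ↔
    (∃ A : ℕ → ℝ, ∀ ζ : ℂ, ∃ P : ℂ → ℝ, ContDiff ℝ (⊤ : ℕ∞) P ∧ P 0 = 0 ∧
        (∀ z, laplacian P z = h (ζ + z)) ∧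
        (∀ z : ℂ, ‖fderiv ℝ P z‖ ≤ A 1 * ‖z‖) ∧
        (∀ k : ℕ, 2 ≤ k → ∀ z : ℂ, ‖iteratedFDeriv ℝ k P z‖ ≤ A k)) := by
  constructor
  · exact exists_normalized_potentials ⟨hsmooth, hCk⟩
  · rintro ⟨A, hA⟩
    refine ⟨8 * Real.pi * A 1, fun ζ r hr => ?_⟩
    obtain ⟨P, hP, -, hΔ, hA₁, -⟩ := hA ζ
    exact norm_annulusIntegral_le (contDiff_infty.1 hP 2) hΔ hA₁ hr

/-- Proposition 1.2: for a non-negative smooth `h : ℂ → ℝ` with all `C^k` norms finite,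
condition (H3) (uniform boundedness of the annulus integrals of `h(ζ+η)/η²`) is
equivalent to the existence of a nice family of subharmonic potentials. -/
theorem statement0 (h : ℂ → ℝ) (hsmooth : ContDiff ℝ (⊤ : ℕ∞) h)
    (hnonneg : ∀ z, 0 ≤ h z)
    (hCk : ∀ k : ℕ, ∃ M : ℝ, ∀ z : ℂ, ‖iteratedFDeriv ℝ k h z‖ ≤ M) :
    (∃ A₀ : ℝ, ∀ ζ : ℂ, ∀ r : ℝ, 1 ≤ r →
        ‖∫ η in {η : ℂ | 1 ≤ ‖η‖ ∧ ‖η‖ ≤ r}, (h (ζ + η) : ℂ) / η ^ 2‖ ≤ A₀) ↔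
    (∃ A : ℕ → ℝ, ∀ ζ : ℂ, ∃ P : ℂ → ℝ, ContDiff ℝ (⊤ : ℕ∞) P ∧ P 0 = 0 ∧
        (∀ z, laplacian P z = h (ζ + z)) ∧
        (∀ z : ℂ, ‖fderiv ℝ P z‖ ≤ A 1 * ‖z‖) ∧
        (∀ k : ℕ, 2 ≤ k → ∀ z : ℂ, ‖iteratedFDeriv ℝ k P z‖ ≤ A k)) := by
  exact statement0_general h hsmooth hCk
end

section
/- Let h : ℂ → [0,∞) be smooth with ‖h‖_{C^k(ℂ)} < ∞ for every k, and suppose h(z) = h(Re z) for all z ∈ ℂ (i.e. h(x+iy) depends only on x). Then sup_{z∈ℂ} sup_{r∈[1,∞)} | ∫_{1≤|η|≤r} h(z+η)/η² dm(η) | < ∞. -/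
open MeasureTheory Complex

/-!
Cut the annulus by the vertical lines `Re η = u`. The chord of the disc `|η| < R` on such a line
has half-length `√(R² - u²)` and endpoints of modulus `R`, so the primitive `v ↦ i / (u + iv)` shows
that `1 / η²` integrates along it to `2 √(R² - u²) / R²`, which is `π` times the density at `u` of
Wigner's semicircle law of radius `R`. A chord of the annulus is a chord of the outer disc minus a
chord of the inner one, so for a bounded function of `Re η` the annulus integral is `π` times the
difference of its averages against two probability densities.
-/

section SemicircleDensity

/-- The density of Wigner's semicircle law of radius `R`. It vanishes for `R ≤ |u|` because `√` is
`0` on negative numbers. -/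
noncomputable def semicircleDensity (R u : ℝ) : ℝ :=
  2 / (Real.pi * R ^ 2) * √(R ^ 2 - u ^ 2)

lemma semicircleDensity_nonneg (R u : ℝ) : 0 ≤ semicircleDensity R u := by
  unfold semicircleDensity
  positivity

lemma integrable_semicircleDensity (R : ℝ) : Integrable (semicircleDensity R) := by
  have hcont : Continuous (semicircleDensity R) := by
    unfold semicircleDensity
    fun_prop
  refine hcont.integrable_of_hasCompactSupport
    (HasCompactSupport.intro (isCompact_Icc (a := -|R|) (b := |R|)) fun u hu => ?_)
  have hRu : R ^ 2 ≤ u ^ 2 := by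
    by_contra! hlt
    exact hu (abs_le.mp (sq_lt_sq.mp hlt).le)
  rw [semicircleDensity, Real.sqrt_eq_zero_of_nonpos (sub_nonpos.mpr hRu), mul_zero]

lemma integral_sqrt_one_sub_sq_eq_pi_div_two : ∫ x : ℝ, √(1 - x ^ 2) = Real.pi / 2 := by
  rw [← integral_sqrt_one_sub_sq, intervalIntegral.integral_of_le (by norm_num)]
  refine (setIntegral_eq_integral_of_forall_compl_eq_zero fun x hx => ?_).symm
  refine Real.sqrt_eq_zero_of_nonpos ?_
  by_contra! hlt
  obtain ⟨hleft, hright⟩ := abs_lt.mp ((sq_lt_one_iff_abs_lt_one x).mp (sub_pos.mp hlt))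
  exact hx ⟨hleft, hright.le⟩

lemma integral_semicircleDensity {R : ℝ} (hR : 0 < R) : ∫ u, semicircleDensity R u = 1 := by
  have hscale (u : ℝ) : √(R ^ 2 - u ^ 2) = R * √(1 - (u / R) ^ 2) := by
    have hfactor : R ^ 2 - u ^ 2 = R ^ 2 * (1 - (u / R) ^ 2) := by field_simp
    rw [hfactor, Real.sqrt_mul (sq_nonneg R), Real.sqrt_sq hR.le]
  simp only [semicircleDensity, hscale]
  rw [integral_const_mul, integral_const_mul, Measure.integral_comp_div (fun x => √(1 - x ^ 2)),
    integral_sqrt_one_sub_sq_eq_pi_div_two, abs_of_pos hR, smul_eq_mul]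
  field_simp

end SemicircleDensity

section VerticalSlices

lemma hasDerivAt_mk (u v : ℝ) : HasDerivAt (Complex.mk u) I v := by
  have hmk : Complex.mk u = fun v : ℝ => u + v * I := funext fun v => mk_eq_add_mul_I u v
  rw [hmk]
  simpa using ((hasDerivAt_id v).ofReal_comp.mul_const I).const_add (u : ℂ)

lemma continuous_mk (u : ℝ) : Continuous (Complex.mk u) :=
  continuous_iff_continuousAt.mpr fun v => (hasDerivAt_mk u v).continuousAt

lemma mk_ne_zero_of_re_ne_zero {u : ℝ} (hu : u ≠ 0) (v : ℝ) : (⟨u, v⟩ : ℂ) ≠ 0 :=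
  fun h => hu (congrArg re h)

lemma mk_preimage_ball {R : ℝ} (hR : 0 < R) (u : ℝ) :
    Complex.mk u ⁻¹' Metric.ball 0 R = Set.Ioo (-√(R ^ 2 - u ^ 2)) √(R ^ 2 - u ^ 2) := by
  ext v
  rw [Set.mem_preimage, mem_ball_zero_iff, mk_eq_add_mul_I, norm_add_mul_I, Real.sqrt_lt' hR,
    Set.mem_Ioo, ← Real.sq_lt, lt_sub_iff_add_lt']

lemma setIntegral_eq_integral_setIntegral_mk {E : Type*} [NormedAddCommGroup E] [NormedSpace ℝ E]
    {f : ℂ → E} {s : Set ℂ} (hs : MeasurableSet s) (hf : IntegrableOn f s) :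
    ∫ z in s, f z = ∫ u : ℝ, ∫ v in Complex.mk u ⁻¹' s, f ⟨u, v⟩ := by
  have hequiv := volume_preserving_equiv_real_prod.symm
  have hembed := measurableEquivRealProd.symm.measurableEmbedding
  have hprod : Integrable (fun p : ℝ × ℝ => s.indicator f (measurableEquivRealProd.symm p))
      (volume.prod volume) :=
    (hequiv.integrable_comp_emb hembed).mpr ((integrable_indicator_iff hs).mpr hf)
  rw [← integral_indicator hs, ← hequiv.integral_comp hembed, Measure.volume_eq_prod,
    integral_prod _ hprod]
  refine integral_congr_ae (.of_forall fun u => ?_)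
  exact integral_indicator (hs.preimage (continuous_mk u).measurable)

lemma locallyIntegrable_comp_re {E : Type*} [NormedAddCommGroup E] {g : ℝ → E}
    (hg : LocallyIntegrable g) : LocallyIntegrable fun z : ℂ => g z.re := by
  refine locallyIntegrable_iff.mpr fun K hK => ?_
  have hre := hK.image continuous_re
  have him := hK.image continuous_im
  have hfin : IsFiniteMeasure (volume.restrict (im '' K)) :=
    isFiniteMeasure_restrict.mpr him.measure_lt_top.ne
  have hprod : IntegrableOn (fun p : ℝ × ℝ => g p.1) ((re '' K) ×ˢ (im '' K)) := by
    rw [IntegrableOn, Measure.volume_eq_prod, ← Measure.prod_restrict]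
    exact (hg.integrableOn_isCompact hre).comp_fst _
  refine ((volume_preserving_equiv_real_prod.integrableOn_comp_preimage
    measurableEquivRealProd.measurableEmbedding).mpr hprod).mono_set fun z hz => ?_
  exact ⟨Set.mem_image_of_mem re hz, Set.mem_image_of_mem im hz⟩

end VerticalSlices

section InverseSquare

lemma continuous_inv_mk_sq {u : ℝ} (hu : u ≠ 0) :
    Continuous fun v : ℝ => ((⟨u, v⟩ : ℂ) ^ 2)⁻¹ :=
  ((continuous_mk u).pow 2).inv₀ fun v => pow_ne_zero 2 (mk_ne_zero_of_re_ne_zero hu v)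

lemma integral_inv_mk_sq {u : ℝ} (hu : u ≠ 0) (a b : ℝ) :
    ∫ v in a..b, ((⟨u, v⟩ : ℂ) ^ 2)⁻¹ = I / ⟨u, b⟩ - I / ⟨u, a⟩ := by
  have hderiv (v : ℝ) : HasDerivAt (fun v : ℝ => I / (⟨u, v⟩ : ℂ)) ((⟨u, v⟩ : ℂ) ^ 2)⁻¹ v :=
    ((hasDerivAt_const v I).div (hasDerivAt_mk u v)
      (mk_ne_zero_of_re_ne_zero hu v)).congr_deriv (by simp)
  exact intervalIntegral.integral_eq_sub_of_hasDerivAt (fun v _ => hderiv v)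
    ((continuous_inv_mk_sq hu).intervalIntegrable a b)

lemma setIntegral_mk_preimage_ball_inv_sq {R u : ℝ} (hR : 0 < R) (hu : u ≠ 0) :
    ∫ v in Complex.mk u ⁻¹' Metric.ball 0 R, ((⟨u, v⟩ : ℂ) ^ 2)⁻¹ =
      (Real.pi * semicircleDensity R u : ℝ) := by
  rw [mk_preimage_ball hR, ← integral_Ioc_eq_integral_Ioo,
    ← intervalIntegral.integral_of_le (neg_le_self (Real.sqrt_nonneg _)), integral_inv_mk_sq hu]
  have hdensity : Real.pi * semicircleDensity R u = 2 * √(R ^ 2 - u ^ 2) / R ^ 2 := by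
    rw [semicircleDensity]
    field_simp
  rw [hdensity]
  rcases le_total (R ^ 2) (u ^ 2) with hRu | hRu
  · simp [Real.sqrt_eq_zero_of_nonpos (sub_nonpos.mpr hRu)]
  · have hsq : √(R ^ 2 - u ^ 2) ^ 2 = R ^ 2 - u ^ 2 := Real.sq_sqrt (sub_nonneg.mpr hRu)
    set V := √(R ^ 2 - u ^ 2)
    have hendpoints : (⟨u, V⟩ : ℂ) * ⟨u, -V⟩ = (R : ℂ) ^ 2 := by
      apply Complex.ext
      · simp only [mul_re, ← ofReal_pow, ofReal_re]
        linarith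
      · simp only [mul_im, ← ofReal_pow, ofReal_im]
        ring
    have hdiff : I * (⟨u, -V⟩ : ℂ) - ⟨u, V⟩ * I = 2 * V := by
      apply Complex.ext
      · simp only [sub_re, mul_re, I_re, I_im, re_ofNat, im_ofNat, ofReal_re, ofReal_im]
        ring
      · simp only [sub_im, mul_im, I_re, I_im, re_ofNat, im_ofNat, ofReal_re, ofReal_im]
        ring
    rw [div_sub_div _ _ (mk_ne_zero_of_re_ne_zero hu V) (mk_ne_zero_of_re_ne_zero hu (-V)),
      hendpoints, hdiff]
    push_cast
    rfl

lemma setIntegral_mk_preimage_annulus_inv_sq {a r u : ℝ} (ha : 0 < a) (har : a ≤ r) (hu : u ≠ 0) :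
    ∫ v in Complex.mk u ⁻¹' (Metric.ball 0 r \ Metric.ball 0 a), ((⟨u, v⟩ : ℂ) ^ 2)⁻¹ =
      (Real.pi * (semicircleDensity r u - semicircleDensity a u) : ℝ) := by
  have hint : IntegrableOn (fun v : ℝ => ((⟨u, v⟩ : ℂ) ^ 2)⁻¹)
      (Complex.mk u ⁻¹' Metric.ball 0 r) := by
    rw [mk_preimage_ball (ha.trans_le har)]
    exact (continuous_inv_mk_sq hu).integrableOn_Icc.mono_set Set.Ioo_subset_Icc_self
  rw [Set.preimage_sdiff,
    setIntegral_sdiff (Metric.isOpen_ball.preimage (continuous_mk u)).measurableSet hint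
      (Set.preimage_mono (Metric.ball_subset_ball har)),
    setIntegral_mk_preimage_ball_inv_sq (ha.trans_le har) hu,
    setIntegral_mk_preimage_ball_inv_sq ha hu]
  push_cast
  ring

end InverseSquare

section Annulus

variable {E : Type*} [NormedAddCommGroup E] [NormedSpace ℂ E]

lemma ball_diff_ball_ae_eq_annulus (a r : ℝ) :
    (Metric.ball 0 r \ Metric.ball 0 a : Set ℂ) =ᵐ[volume] {η : ℂ | a ≤ ‖η‖ ∧ ‖η‖ ≤ r} := by
  have hsphere : volume (Metric.sphere (0 : ℂ) r) = 0 := Measure.addHaar_sphere volume 0 r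
  refine Filter.eventuallyEq_set.mpr ?_
  filter_upwards [measure_eq_zero_iff_ae_notMem.mp hsphere] with η hη
  have hne : ‖η‖ ≠ r := by simpa using hη
  simp [hne.le_iff_lt, and_comm]

lemma integrableOn_inv_sq_smul_comp_re {g : ℝ → E} (hg : LocallyIntegrable g) {a : ℝ} (ha : 0 < a)
    (r : ℝ) :
    IntegrableOn (fun η : ℂ => (η ^ 2)⁻¹ • g η.re) (Metric.ball 0 r \ Metric.ball 0 a) := by
  have hcompact : IsCompact (Metric.closedBall (0 : ℂ) r \ Metric.ball 0 a) :=
    (isCompact_closedBall 0 r).diff Metric.isOpen_ball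
  have hcont : ContinuousOn (fun η : ℂ => (η ^ 2)⁻¹) (Metric.closedBall 0 r \ Metric.ball 0 a) := by
    refine (continuous_pow 2).continuousOn.inv₀ fun η hη => pow_ne_zero 2 ?_
    rintro rfl
    exact hη.2 (Metric.mem_ball_self ha)
  exact (((locallyIntegrable_comp_re hg).integrableOn_isCompact hcompact).continuousOn_smul
    hcont hcompact).mono_set (Set.sdiff_subset_sdiff_left Metric.ball_subset_closedBall)

variable [CompleteSpace E]

theorem setIntegral_annulus_inv_sq_smul_comp_re {g : ℝ → E} (hg : LocallyIntegrable g) {a r : ℝ}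
    (ha : 0 < a) (har : a ≤ r) :
    ∫ η in {η : ℂ | a ≤ ‖η‖ ∧ ‖η‖ ≤ r}, (η ^ 2)⁻¹ • g η.re =
      ∫ u : ℝ, (Real.pi * (semicircleDensity r u - semicircleDensity a u) : ℝ) • g u := by
  rw [← setIntegral_congr_set (ball_diff_ball_ae_eq_annulus a r),
    setIntegral_eq_integral_setIntegral_mk (measurableSet_ball.diff measurableSet_ball)
      (integrableOn_inv_sq_smul_comp_re hg ha r)]
  refine integral_congr_ae ?_
  filter_upwards [Measure.ae_ne volume (0 : ℝ)] with u hu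
  rw [integral_smul_const, setIntegral_mk_preimage_annulus_inv_sq ha har hu, coe_smul]

theorem norm_setIntegral_annulus_inv_sq_smul_comp_re_le {g : ℝ → E} (hg : AEStronglyMeasurable g)
    {M : ℝ} (hM : ∀ u, ‖g u‖ ≤ M) {a r : ℝ} (ha : 0 < a) (har : a ≤ r) :
    ‖∫ η in {η : ℂ | a ≤ ‖η‖ ∧ ‖η‖ ≤ r}, (η ^ 2)⁻¹ • g η.re‖ ≤ 2 * Real.pi * M := by
  have hloc : LocallyIntegrable g :=
    (memLp_top_of_bound hg M (.of_forall hM)).locallyIntegrable le_top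
  have hbound (u : ℝ) :
      ‖(Real.pi * (semicircleDensity r u - semicircleDensity a u)) • g u‖ ≤
        Real.pi * (semicircleDensity r u + semicircleDensity a u) * M := by
    rw [norm_smul, norm_mul, Real.norm_of_nonneg Real.pi_pos.le]
    have hdensity : ‖semicircleDensity r u - semicircleDensity a u‖ ≤
        semicircleDensity r u + semicircleDensity a u := by
      refine (norm_sub_le _ _).trans_eq ?_
      rw [Real.norm_of_nonneg (semicircleDensity_nonneg r u),
        Real.norm_of_nonneg (semicircleDensity_nonneg a u)]
    have hsum_nonneg := (norm_nonneg _).trans hdensity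
    gcongr
    exact hM u
  have hr_int := integrable_semicircleDensity r
  have ha_int := integrable_semicircleDensity a
  rw [setIntegral_annulus_inv_sq_smul_comp_re hloc ha har]
  calc _ ≤ ∫ u, Real.pi * (semicircleDensity r u + semicircleDensity a u) * M :=
        norm_integral_le_of_norm_le (((hr_int.add ha_int).const_mul _).mul_const M)
          (.of_forall hbound)
    _ = 2 * Real.pi * M := by
        rw [integral_mul_const, integral_const_mul, integral_add hr_int ha_int,
          integral_semicircleDensity (ha.trans_le har), integral_semicircleDensity ha]
        ring

theorem statement1_general {h : ℂ → E} (hmeas : StronglyMeasurable h) {M : ℝ}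
    (hM : ∀ z, ‖h z‖ ≤ M) (htube : ∀ z : ℂ, h z = h (z.re : ℂ)) (z : ℂ) {a r : ℝ} (ha : 0 < a)
    (har : a ≤ r) :
    ‖∫ η in {η : ℂ | a ≤ ‖η‖ ∧ ‖η‖ ≤ r}, (η ^ 2)⁻¹ • h (z + η)‖ ≤ 2 * Real.pi * M := by
  have hslice : AEStronglyMeasurable fun u : ℝ => h ((z.re + u : ℝ) : ℂ) :=
    (hmeas.comp_measurable (by fun_prop)).aestronglyMeasurable
  simpa only [← add_re, ← htube] using
    norm_setIntegral_annulus_inv_sq_smul_comp_re_le hslice (fun u => hM _) ha har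

end Annulus

/-- Proposition 1.3(a): if `h : ℂ → [0,∞)` is smooth with all `C^k` norms finite and
depends only on `Re z` (a tube domain), then the annulus integrals
`∫_{1≤|η|≤r} h(z+η)/η² dm(η)` are uniformly bounded in `z` and `r ≥ 1`. -/
theorem statement1 (h : ℂ → ℝ) (hsmooth : ContDiff ℝ (⊤ : ℕ∞) h)
    (hnonneg : ∀ z, 0 ≤ h z)
    (hCk : ∀ k : ℕ, ∃ M : ℝ, ∀ z : ℂ, ‖iteratedFDeriv ℝ k h z‖ ≤ M)
    (htube : ∀ z : ℂ, h z = h (z.re : ℂ)) :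
    ∃ A₀ : ℝ, ∀ z : ℂ, ∀ r : ℝ, 1 ≤ r →
      ‖∫ η in {η : ℂ | 1 ≤ ‖η‖ ∧ ‖η‖ ≤ r}, (h (z + η) : ℂ) / η ^ 2‖ ≤ A₀ := by
  obtain ⟨M, hM⟩ := hCk 0
  have hcont : Continuous fun z => (h z : ℂ) := continuous_ofReal.comp hsmooth.continuous
  refine ⟨2 * Real.pi * M, fun z r hr => ?_⟩
  simpa only [smul_eq_mul, inv_mul_eq_div] using statement1_general hcont.stronglyMeasurable
    (fun z => by simpa using hM z) (fun z => congrArg _ (htube z)) z one_pos hr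
end

section
/- Let h : ℂ → [0,∞) be smooth with ‖h‖_{C^k(ℂ)} < ∞ for every k. Suppose there exist constants A ≥ 0, B > 0 and C > 0 such that ∫_{|η|≤r} |h(η+z) − A| dm(η) ≤ B r^{2−C} for all z ∈ ℂ and all r ≥ 1. Then there is a constant K, depending only on B and C, such that | ∫_{1≤|η|≤r} h(z+η)/η² dm(η) | ≤ K for all z ∈ ℂ and all r ∈ [1,∞). -/
open MeasureTheory Complex

/-!
The kernel `1 / η²` changes sign under the rotation `η ↦ iη`, so its integral over a centred
annulus vanishes and `A` may be subtracted from `h` for free. Since `|1 / η²| ≤ 4 ^ (-k)` on the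
dyadic shell `2 ^ k ≤ |η| < 2 ^ (k + 1)`, the growth hypothesis bounds the contribution of that
shell by a constant times `2 ^ (-C k)`, and these bounds form a convergent geometric series.
-/

section Integrability

variable {α 𝕜 : Type*} [MeasurableSpace α] {μ : Measure α} [NormedField 𝕜] [MeasurableSpace 𝕜]
  [BorelSpace 𝕜] [SecondCountableTopology 𝕜]

lemma integrableOn_div_of_le_norm {f d : α → 𝕜} {S : Set α} (hf : IntegrableOn f S μ)
    (hd : Measurable d) (hS : MeasurableSet S) {c : ℝ} (hc : 0 < c) (hcd : ∀ x ∈ S, c ≤ ‖d x‖) :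
    IntegrableOn (fun x => f x / d x) S μ := by
  simp only [div_eq_mul_inv]
  refine Integrable.mul_bdd (c := c⁻¹) hf hd.inv.aestronglyMeasurable ?_
  filter_upwards [ae_restrict_mem hS] with x hx
  rw [norm_inv]
  exact inv_anti₀ hc (hcd x hx)

end Integrability

section MeanZero

variable {α E : Type*} [MeasurableSpace α] {μ : Measure α} [NormedAddCommGroup E] [NormedSpace ℝ E]

lemma setIntegral_eq_zero_of_comp_eq_neg {e : α → α} (he : MeasurePreserving e μ μ)
    (hemb : MeasurableEmbedding e) {S : Set α} (hS : e ⁻¹' S = S) {f : α → E}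
    (hf : ∀ x, f (e x) = -f x) : ∫ x in S, f x ∂μ = 0 := by
  have hneg := he.setIntegral_preimage_emb hemb f S
  simp only [hS, hf, integral_neg] at hneg
  have : IsAddTorsionFree E := .of_isTorsionFree ℝ E
  exact self_eq_neg.mp hneg.symm

end MeanZero

lemma setIntegral_annulus_div_sq_eq_zero (a : ℂ) (J : Set ℝ) :
    ∫ η in norm ⁻¹' J, a / η ^ 2 = 0 := by
  let e : ℂ ≃ₗᵢ[ℝ] ℂ := rotation ⟨I, by simp [Submonoid.unitSphere]⟩
  have he : ∀ η, e η = I * η := fun η => rotation_apply _ η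
  refine setIntegral_eq_zero_of_comp_eq_neg e.measurePreserving
    e.toHomeomorph.measurableEmbedding (by ext; simp) fun η => ?_
  rw [he, mul_pow, I_sq, neg_one_mul, div_neg]

section DyadicSummation

variable {V : Type*} [NormedAddCommGroup V] [MeasurableSpace V] [OpensMeasurableSpace V]
  {μ : Measure V} {g : V → ℝ} {s : ℝ}

lemma integrableOn_annulus_div_norm_rpow (hs : 0 ≤ s) {J : Set ℝ} (hJ : MeasurableSet J)
    {a : ℝ} (ha : 0 < a) (haJ : ∀ t ∈ J, a ≤ t) (hg : IntegrableOn g (norm ⁻¹' J) μ) :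
    IntegrableOn (fun x => g x / ‖x‖ ^ s) (norm ⁻¹' J) μ := by
  refine integrableOn_div_of_le_norm hg (measurable_norm.pow_const s) (measurable_norm hJ)
    (Real.rpow_pos_of_pos ha s) fun x hx => ?_
  rw [Real.norm_of_nonneg (by positivity)]
  exact Real.rpow_le_rpow ha.le (haJ _ hx) hs

lemma setIntegral_annulus_div_norm_rpow_le (hs : 0 ≤ s) (hg0 : ∀ x, 0 ≤ g x) {a b : ℝ}
    (ha : 0 < a) (hg : IntegrableOn g {x | ‖x‖ ≤ b} μ) :
    ∫ x in norm ⁻¹' Set.Ico a b, g x / ‖x‖ ^ s ∂μ ≤ (∫ x in {x | ‖x‖ ≤ b}, g x ∂μ) / a ^ s := by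
  have hsub : norm ⁻¹' Set.Ico a b ⊆ {x : V | ‖x‖ ≤ b} := fun x hx => hx.2.le
  calc ∫ x in norm ⁻¹' Set.Ico a b, g x / ‖x‖ ^ s ∂μ
      ≤ ∫ x in norm ⁻¹' Set.Ico a b, g x / a ^ s ∂μ := by
        refine setIntegral_mono_on (integrableOn_annulus_div_norm_rpow hs measurableSet_Ico ha
          (fun t ht => ht.1) (hg.mono_set hsub)) ((hg.mono_set hsub).div_const _)
          (measurable_norm measurableSet_Ico) fun x hx => ?_
        have := hg0 x
        have := hx.1
        gcongr
    _ = (∫ x in norm ⁻¹' Set.Ico a b, g x ∂μ) / a ^ s := integral_div _ _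
    _ ≤ (∫ x in {x | ‖x‖ ≤ b}, g x ∂μ) / a ^ s := by
        gcongr
        exact ae_of_all _ hg0

variable {B C : ℝ}

lemma setIntegral_dyadic_shell_div_norm_rpow_le (hs : 0 ≤ s) (hg0 : ∀ x, 0 ≤ g x)
    (hg : ∀ r, IntegrableOn g {x | ‖x‖ ≤ r} μ)
    (hgrowth : ∀ r, 1 ≤ r → ∫ x in {x | ‖x‖ ≤ r}, g x ∂μ ≤ B * r ^ (s - C)) (k : ℕ) :
    ∫ x in norm ⁻¹' Set.Ico (2 ^ k) (2 ^ (k + 1)), g x / ‖x‖ ^ s ∂μ ≤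
      B * 2 ^ (s - C) * ((2 : ℝ) ^ (-C)) ^ k := by
  have hexp : ((2 : ℝ) ^ (k + 1)) ^ (s - C) =
      2 ^ (s - C) * ((2 : ℝ) ^ (-C)) ^ k * (2 ^ k) ^ s := by
    simp only [← Real.rpow_natCast, ← Real.rpow_mul two_pos.le, ← Real.rpow_add two_pos]
    congr 1
    push_cast
    ring
  calc ∫ x in norm ⁻¹' Set.Ico (2 ^ k) (2 ^ (k + 1)), g x / ‖x‖ ^ s ∂μ
      ≤ (∫ x in {x | ‖x‖ ≤ 2 ^ (k + 1)}, g x ∂μ) / (2 ^ k) ^ s :=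
        setIntegral_annulus_div_norm_rpow_le hs hg0 (by positivity) (hg _)
    _ ≤ B * (2 ^ (k + 1)) ^ (s - C) / (2 ^ k) ^ s := by
        gcongr
        exact hgrowth _ (one_le_pow₀ one_le_two)
    _ = B * 2 ^ (s - C) * ((2 : ℝ) ^ (-C)) ^ k := by
        rw [hexp]
        field_simp

lemma setIntegral_div_norm_rpow_le_geom_sum (hs : 0 ≤ s) (hg0 : ∀ x, 0 ≤ g x)
    (hg : ∀ r, IntegrableOn g {x | ‖x‖ ≤ r} μ)
    (hgrowth : ∀ r, 1 ≤ r → ∫ x in {x | ‖x‖ ≤ r}, g x ∂μ ≤ B * r ^ (s - C)) (n : ℕ) :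
    ∫ x in norm ⁻¹' Set.Ico 1 (2 ^ n), g x / ‖x‖ ^ s ∂μ ≤
      B * 2 ^ (s - C) * ∑ k ∈ Finset.range n, ((2 : ℝ) ^ (-C)) ^ k := by
  induction n with
  | zero => simp
  | succ n ih =>
    have hn : (1 : ℝ) ≤ 2 ^ n := one_le_pow₀ one_le_two
    have hint : ∀ a b : ℝ, 1 ≤ a →
        IntegrableOn (fun x => g x / ‖x‖ ^ s) (norm ⁻¹' Set.Ico a b) μ := fun a b ha =>
      integrableOn_annulus_div_norm_rpow hs measurableSet_Ico one_pos
        (fun t ht => ha.trans ht.1) ((hg b).mono_set fun x hx => hx.2.le)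
    rw [← Set.Ico_union_Ico_eq_Ico hn (pow_le_pow_right₀ one_le_two n.le_succ), Set.preimage_union,
      setIntegral_union (Set.Ico_disjoint_Ico_same.preimage _)
        (measurable_norm measurableSet_Ico) (hint _ _ le_rfl) (hint _ _ hn),
      Finset.sum_range_succ, mul_add]
    exact add_le_add ih (setIntegral_dyadic_shell_div_norm_rpow_le hs hg0 hg hgrowth n)

lemma setIntegral_div_norm_rpow_le_of_growth (hC : 0 < C) (hs : 0 ≤ s) (hg0 : ∀ x, 0 ≤ g x)
    (hg : ∀ r, IntegrableOn g {x | ‖x‖ ≤ r} μ)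
    (hgrowth : ∀ r, 1 ≤ r → ∫ x in {x | ‖x‖ ≤ r}, g x ∂μ ≤ B * r ^ (s - C)) (r : ℝ) :
    ∫ x in norm ⁻¹' Set.Icc 1 r, g x / ‖x‖ ^ s ∂μ ≤ B * 2 ^ (s - C) * (1 - 2 ^ (-C))⁻¹ := by
  have hB : 0 ≤ B := by
    simpa using (integral_nonneg hg0).trans (hgrowth 1 le_rfl)
  have hratio : (2 : ℝ) ^ (-C) < 1 :=
    Real.rpow_lt_one_of_one_lt_of_neg one_lt_two (neg_neg_of_pos hC)
  obtain ⟨n, hn⟩ := pow_unbounded_of_one_lt r one_lt_two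
  calc ∫ x in norm ⁻¹' Set.Icc 1 r, g x / ‖x‖ ^ s ∂μ
      ≤ ∫ x in norm ⁻¹' Set.Ico 1 (2 ^ n), g x / ‖x‖ ^ s ∂μ := by
        refine setIntegral_mono_set ?_ (ae_of_all _ fun x => ?_)
          (Set.preimage_mono (Set.Icc_subset_Ico_right hn)).eventuallyLE
        · exact integrableOn_annulus_div_norm_rpow hs measurableSet_Ico one_pos
            (fun t ht => ht.1) ((hg _).mono_set fun x hx => hx.2.le)
        · exact div_nonneg (hg0 x) (by positivity)
    _ ≤ B * 2 ^ (s - C) * ∑ k ∈ Finset.range n, ((2 : ℝ) ^ (-C)) ^ k :=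
        setIntegral_div_norm_rpow_le_geom_sum hs hg0 hg hgrowth n
    _ ≤ B * 2 ^ (s - C) * (1 - 2 ^ (-C))⁻¹ := by
        gcongr
        exact sum_le_hasSum _ (fun _ _ => by positivity)
          (hasSum_geometric_of_lt_one (by positivity) hratio)

end DyadicSummation

lemma setIntegral_annulus_sub_const_div_sq {f : ℂ → ℂ} (hf : LocallyIntegrable f) (a : ℂ)
    (r : ℝ) :
    ∫ η in norm ⁻¹' Set.Icc 1 r, (f η - a) / η ^ 2 =
      ∫ η in norm ⁻¹' Set.Icc 1 r, f η / η ^ 2 := by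
  have hint : ∀ u : ℂ → ℂ, LocallyIntegrable u →
      IntegrableOn (fun η => u η / η ^ 2) (norm ⁻¹' Set.Icc 1 r) := fun u hu => by
    refine integrableOn_div_of_le_norm ?_ (by fun_prop) (measurable_norm measurableSet_Icc)
      one_pos fun η hη => ?_
    · exact (hu.integrableOn_isCompact (isCompact_closedBall 0 r)).mono_set
        fun η hη => mem_closedBall_zero_iff.mpr hη.2
    · rw [norm_pow]
      exact one_le_pow₀ hη.1
  simp only [sub_div]
  rw [integral_sub (hint f hf) (hint _ continuous_const.locallyIntegrable),
    setIntegral_annulus_div_sq_eq_zero, sub_zero]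

theorem statement2_general {f : ℂ → ℂ} (hf : LocallyIntegrable f) {a : ℂ} {B C : ℝ} (hC : 0 < C)
    (hgrowth : ∀ r : ℝ, 1 ≤ r → ∫ η in {η : ℂ | ‖η‖ ≤ r}, ‖f η - a‖ ≤ B * r ^ (2 - C)) (r : ℝ) :
    ‖∫ η in {η : ℂ | 1 ≤ ‖η‖ ∧ ‖η‖ ≤ r}, f η / η ^ 2‖ ≤
      B * 2 ^ (2 - C) * (1 - 2 ^ (-C))⁻¹ := by
  have hint : ∀ R : ℝ, IntegrableOn (fun η => ‖f η - a‖) {η : ℂ | ‖η‖ ≤ R} := fun R =>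
    (((hf.sub continuous_const.locallyIntegrable).integrableOn_isCompact
      (isCompact_closedBall 0 R)).mono_set fun η hη => mem_closedBall_zero_iff.mpr hη).norm
  calc ‖∫ η in norm ⁻¹' Set.Icc 1 r, f η / η ^ 2‖
      = ‖∫ η in norm ⁻¹' Set.Icc 1 r, (f η - a) / η ^ 2‖ := by
        rw [setIntegral_annulus_sub_const_div_sq hf]
    _ ≤ ∫ η in norm ⁻¹' Set.Icc 1 r, ‖(f η - a) / η ^ 2‖ := norm_integral_le_integral_norm _
    _ = ∫ η in norm ⁻¹' Set.Icc 1 r, ‖f η - a‖ / ‖η‖ ^ (2 : ℝ) := by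
        simp only [norm_div, norm_pow, Real.rpow_two]
    _ ≤ B * 2 ^ (2 - C) * (1 - 2 ^ (-C))⁻¹ :=
        setIntegral_div_norm_rpow_le_of_growth hC two_pos.le (fun _ => norm_nonneg _) hint
          hgrowth r

/-- Proposition 1.3(b): if `h : ℂ → [0,∞)` is smooth with all `C^k` norms finite
and is well approximated on large scales by a constant `A` in the sense that
`∫_{|η|≤r} |h(η+z) − A| dm(η) ≤ B r^{2−C}` for all `z` and `r ≥ 1`, then the annulus
integrals `∫_{1≤|η|≤r} h(z+η)/η² dm(η)` are bounded by a constant `K = K(B,C)`. -/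
theorem statement2 (B C : ℝ) (hB : 0 < B) (hC : 0 < C) :
    ∃ K : ℝ, ∀ h : ℂ → ℝ, ContDiff ℝ (⊤ : ℕ∞) h → (∀ z, 0 ≤ h z) →
      (∀ k : ℕ, ∃ M : ℝ, ∀ z : ℂ, ‖iteratedFDeriv ℝ k h z‖ ≤ M) →
      ∀ A : ℝ, 0 ≤ A →
      (∀ z : ℂ, ∀ r : ℝ, 1 ≤ r →
        (∫ η in {η : ℂ | ‖η‖ ≤ r}, |h (η + z) - A|) ≤ B * r ^ (2 - C)) →
      ∀ z : ℂ, ∀ r : ℝ, 1 ≤ r →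
        ‖∫ η in {η : ℂ | 1 ≤ ‖η‖ ∧ ‖η‖ ≤ r}, (h (z + η) : ℂ) / η ^ 2‖ ≤ K := by
  refine ⟨B * 2 ^ (2 - C) * (1 - 2 ^ (-C))⁻¹, fun h hh _ _ A _ hgrowth z r _ => ?_⟩
  have hcont : Continuous fun η => (h (z + η) : ℂ) := by
    have := hh.continuous
    fun_prop
  refine statement2_general hcont.locallyIntegrable (a := A) hC (fun R hR => ?_) r
  simpa only [← ofReal_sub, norm_real, Real.norm_eq_abs, add_comm z] using hgrowth z R hR
end

section
/- Fix an integer m ≥ 0 and c ∈ (0, 2π). Then there exists C > 0, depending only on m and c, such that for every (A₀,…,A_m) ∈ ℂ^{m+1} with Σ_{k=0}^m |A_k| = 1, the arc-length measure of the set { ν ∈ S¹ : |Σ_{k=0}^m A_k ν^k| ≥ C } is strictly greater than c. -/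
open MeasureTheory Complex Finset

/-!
Suppose that no `C` works. Then there are coefficient vectors `A₀, A₁, …` on the unit sphere of `ℓ¹`
such that `1 / (n + 1) ≤ |p_{Aₙ}|` holds only on a set of measure at most `c`. By compactness a
subsequence converges to some `A ≠ 0`, and `p_A` vanishes at only finitely many points of the
circle. At every other point the inequality holds for all large `n` of the subsequence, so Fatou's
lemma for sets makes the measure of the whole circle at most `c < 2π`.
-/

open Filter Topology
open scoped ENNReal Polynomial

section UniformLowerBound

variable {α : Type*} [MeasurableSpace α] {μ : Measure α} {c : ℝ≥0∞}

theorem eventually_lt_measure_of_ae_eventually_mem {ι : Type*} [Preorder ι] [IsDirectedOrder ι]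
    [Nonempty ι] [(atTop : Filter ι).IsCountablyGenerated] {s : ι → Set α}
    (hs : ∀ᵐ x ∂μ, ∀ᶠ i in atTop, x ∈ s i) (hc : c < μ Set.univ) :
    ∀ᶠ i in atTop, c < μ (s i) := by
  have hmono : Monotone fun i => ⋂ j ≥ i, s j := fun i j hij =>
    Set.biInter_mono (fun _ hk => hij.trans hk) fun _ _ => subset_rfl
  have hunion : μ (⋃ i, ⋂ j ≥ i, s j) = μ Set.univ := by
    refine measure_congr (eventuallyEq_univ.2 ?_)
    filter_upwards [hs] with x hx
    simpa only [Set.mem_iUnion, Set.mem_iInter] using eventually_atTop.1 hx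
  filter_upwards [(tendsto_measure_iUnion_atTop hmono).eventually (lt_mem_nhds (hunion ▸ hc))]
    with i hi
  exact hi.trans_le (measure_mono (Set.biInter_subset_of_mem le_rfl))

theorem exists_pos_forall_lt_measure_le_of_isSeqCompact {X : Type*} [TopologicalSpace X] {K : Set X}
    (hK : IsSeqCompact K) {g : X → α → ℝ}
    (hg : ∀ᵐ x ∂μ, LowerSemicontinuousOn (fun a => g a x) K)
    (hpos : ∀ a ∈ K, ∀ᵐ x ∂μ, 0 < g a x) (hc : c < μ Set.univ) :
    ∃ C : ℝ, 0 < C ∧ ∀ a ∈ K, c < μ {x | C ≤ g a x} := by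
  by_contra! hfail
  choose a haK hac using fun n : ℕ => hfail (1 / ((n : ℝ) + 1)) Nat.one_div_pos_of_nat
  obtain ⟨b, hbK, φ, hφ, hlim⟩ := hK haK
  have hlimK : Tendsto (a ∘ φ) atTop (𝓝[K] b) :=
    tendsto_nhdsWithin_iff.2 ⟨hlim, .of_forall fun n => haK (φ n)⟩
  have hsmall : Tendsto (fun n => 1 / ((φ n : ℝ) + 1)) atTop (𝓝 0) :=
    tendsto_one_div_add_atTop_nhds_zero_nat.comp hφ.tendsto_atTop
  have hev : ∀ᵐ x ∂μ, ∀ᶠ n in atTop, x ∈ {x | 1 / ((φ n : ℝ) + 1) ≤ g (a (φ n)) x} := by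
    filter_upwards [hg, hpos b hbK] with x hgx hbx
    filter_upwards [hsmall.eventually (gt_mem_nhds (half_pos hbx)),
      hlimK.eventually (hgx b hbK _ (half_lt_self hbx))] with n hn hgn
    exact (hn.trans hgn).le
  obtain ⟨n, hn⟩ := (eventually_lt_measure_of_ae_eventually_mem hev hc).exists
  exact hn.not_ge (hac (φ n))

end UniformLowerBound

theorem ae_eval_circleMap_ne_zero {p : ℂ[X]} (hp : p ≠ 0) (z : ℂ) {R : ℝ} (hR : R ≠ 0) :
    ∀ᵐ θ : ℝ, p.eval (circleMap z R θ) ≠ 0 :=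
  ((Polynomial.finite_setOfPred_isRoot hp).countable.preimage_circleMap z hR).ae_notMem volume

theorem eval_ofFn {R : Type*} [Semiring R] [DecidableEq R] {n : ℕ} (v : Fin n → R) (x : R) :
    (Polynomial.ofFn n v).eval x = ∑ k, v k * x ^ (k : ℕ) := by
  simp only [Polynomial.ofFn_eq_sum_monomial, Polynomial.eval_finsetSum, Polynomial.eval_monomial]

theorem ae_sum_mul_exp_pow_ne_zero {n : ℕ} {A : Fin n → ℂ} (hA : A ≠ 0) :
    ∀ᵐ θ : ℝ, ∑ k, A k * Complex.exp ((θ : ℂ) * Complex.I) ^ (k : ℕ) ≠ 0 := by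
  have hp : Polynomial.ofFn n A ≠ 0 :=
    (map_ne_zero_iff _ (Polynomial.injective_ofFn n)).2 hA
  filter_upwards [ae_eval_circleMap_ne_zero hp 0 one_ne_zero] with θ hθ
  rwa [eval_ofFn, circleMap_zero, ofReal_one, one_mul] at hθ

/-- For each `m ≥ 0` and `c ∈ (0, 2π)` there is `C > 0`, depending only on `m` and `c`,
such that for every polynomial `p(ν) = Σ_{k=0}^m A_k ν^k` with `Σ |A_k| = 1`, the
arc-length measure of `{ν ∈ S¹ : |p(ν)| ≥ C}` exceeds `c`. The circle is parametrized
by `ν = e^{iθ}`, `θ ∈ [0, 2π)`, so arc-length measure is Lebesgue measure in `θ`. -/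
theorem statement7 (m : ℕ) (c : ℝ) (hc : 0 < c) (hc2 : c < 2 * Real.pi) :
    ∃ C : ℝ, 0 < C ∧ ∀ A : Fin (m + 1) → ℂ, (∑ k, ‖A k‖) = 1 →
      ENNReal.ofReal c < volume {θ : ℝ | θ ∈ Set.Ico 0 (2 * Real.pi) ∧
        C ≤ ‖∑ k : Fin (m + 1), A k * Complex.exp ((θ : ℂ) * Complex.I) ^ (k : ℕ)‖} := by
  have hcircle : ENNReal.ofReal c < volume.restrict (Set.Ico 0 (2 * Real.pi)) Set.univ := by
    rw [Measure.restrict_apply_univ, Real.volume_Ico, sub_zero]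
    exact (ENNReal.ofReal_lt_ofReal_iff Real.two_pi_pos).2 hc2
  let p (A : PiLp 1 fun _ : Fin (m + 1) => ℂ) (θ : ℝ) : ℂ :=
    ∑ k, A k * Complex.exp ((θ : ℂ) * Complex.I) ^ (k : ℕ)
  have hcont (θ : ℝ) : Continuous fun A => ‖p A θ‖ := by fun_prop
  have hpos : ∀ A ∈ Metric.sphere 0 1,
      ∀ᵐ θ ∂volume.restrict (Set.Ico 0 (2 * Real.pi)), 0 < ‖p A θ‖ := fun A hA => by
    have hA0 : A.ofLp ≠ 0 :=
      (WithLp.ofLp_eq_zero 1).not.2 (ne_zero_of_mem_unit_sphere ⟨A, hA⟩)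
    filter_upwards [ae_restrict_of_ae (ae_sum_mul_exp_pow_ne_zero hA0)] with θ hθ
    exact norm_pos_iff.2 hθ
  obtain ⟨C, hC, hlarge⟩ := exists_pos_forall_lt_measure_le_of_isSeqCompact
    (isCompact_sphere 0 1).isSeqCompact
    (.of_forall fun θ => (hcont θ).lowerSemicontinuous.lowerSemicontinuousOn _) hpos hcircle
  refine ⟨C, hC, fun A hA => ?_⟩
  have hsphere : WithLp.toLp 1 A ∈ Metric.sphere 0 1 := by
    rwa [mem_sphere_zero_iff_norm, PiLp.norm_eq_of_L1]
  have hlargeA := hlarge _ hsphere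
  rwa [Measure.restrict_apply' measurableSet_Ico, Set.inter_comm] at hlargeA
end

section
/- Let f : (0,∞) → [0,∞) be a positive decreasing function and let ε > 0. If f(2τ) ≥ 2^{−1+ε} f(τ) for all τ > 0, then there exists a constant C = C(ε) such that ∫_0^a f(τ) dτ ≤ C a f(a) for all 0 < a < ∞. -/
open MeasureTheory

/-!
Put `k = r * c`, which exceeds `1`. Substituting `τ ↦ r * τ` turns `c * f τ ≤ f (r * τ)` into
`k * ∫ f over (x, a / r) ≤ ∫ f over (r * x, a)`. The two intervals differ from `(x, a)` only by the
end pieces `(a / r, a)` and `(x, r * x)`, on which the monotone `f` is compared with its endpoint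
values; solving for the integral gives
`(k - 1) * ∫ f over (x, a) ≤ (r - 1) * ((a - x) * f a)`.
Letting `x` tend to `0` yields both integrability near `0` and the bound.
For `r = 2` and `c = 2 ^ (-1 + ε)` the constant is `(r - 1) / (k - 1) = 1 / (2 ^ ε - 1)`.
-/

open Set Filter Topology

section Antitone

variable {f : ℝ → ℝ} {a b : ℝ}

theorem intervalIntegrable_of_antitoneOn_Icc (hab : a ≤ b) (hf : AntitoneOn f (Icc a b)) :
    IntervalIntegrable f volume a b :=
  AntitoneOn.intervalIntegrable (by rwa [uIcc_of_le hab])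

theorem intervalIntegral_le_sub_mul_left_of_antitoneOn (hab : a ≤ b)
    (hf : AntitoneOn f (Icc a b)) : ∫ t in a..b, f t ≤ (b - a) * f a := by
  calc ∫ t in a..b, f t ≤ ∫ _ in a..b, f a :=
        intervalIntegral.integral_mono_on hab (intervalIntegrable_of_antitoneOn_Icc hab hf)
          intervalIntegrable_const fun t ht => hf (left_mem_Icc.2 hab) ht ht.1
    _ = (b - a) * f a := by rw [intervalIntegral.integral_const, smul_eq_mul]

theorem sub_mul_right_le_intervalIntegral_of_antitoneOn (hab : a ≤ b)
    (hf : AntitoneOn f (Icc a b)) : (b - a) * f b ≤ ∫ t in a..b, f t := by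
  calc (b - a) * f b = ∫ _ in a..b, f b := by rw [intervalIntegral.integral_const, smul_eq_mul]
    _ ≤ ∫ t in a..b, f t :=
        intervalIntegral.integral_mono_on hab intervalIntegrable_const
          (intervalIntegrable_of_antitoneOn_Icc hab hf)
          fun t ht => hf ht (right_mem_Icc.2 hab) ht.2

theorem integrableOn_Ioc_of_antitoneOn_of_isBoundedUnder (hab : a < b)
    (hf : AntitoneOn f (Ioc a b))
    (hbdd : IsBoundedUnder (· ≤ ·) (𝓝[>] a) fun x => ∫ t in x..b, f t) :
    IntegrableOn f (Ioc a b) := by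
  obtain ⟨M, hM⟩ := hbdd
  obtain ⟨u, -, hu, hu_lim⟩ := exists_seq_strictAnti_tendsto' hab
  have hu_right : Tendsto u atTop (𝓝[>] a) :=
    tendsto_nhdsWithin_iff.2 ⟨hu_lim, .of_forall fun n => (hu n).1⟩
  have hint n : IntervalIntegrable f volume (u n) b :=
    intervalIntegrable_of_antitoneOn_Icc (hu n).2.le
      (hf.mono fun t ht => ⟨(hu n).1.trans_le ht.1, ht.2⟩)
  have hnorm n : ∫ t in Ioc (u n) b, ‖f t - f b‖ = (∫ t in u n..b, f t) - (b - u n) * f b := by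
    calc ∫ t in Ioc (u n) b, ‖f t - f b‖ = ∫ t in Ioc (u n) b, (f t - f b) :=
          setIntegral_congr_fun measurableSet_Ioc fun t ht => Real.norm_of_nonneg <|
            sub_nonneg.2 (hf ⟨(hu n).1.trans ht.1, ht.2⟩ (right_mem_Ioc.2 hab) ht.2)
      _ = (∫ t in u n..b, f t) - (b - u n) * f b := by
          rw [← intervalIntegral.integral_of_le (hu n).2.le,
            intervalIntegral.integral_sub (hint n) intervalIntegrable_const,
            intervalIntegral.integral_const, smul_eq_mul]
  have hbound : ∀ᶠ n in atTop, ∫ t in Ioc (u n) b, ‖f t - f b‖ ≤ M + (b - a) * |f b| := by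
    filter_upwards [hu_right.eventually (eventually_map.1 hM)] with n hn
    have hlower : -((b - a) * |f b|) ≤ (b - u n) * f b := by
      nlinarith [(hu n).1, (hu n).2, neg_abs_le (f b), abs_nonneg (f b)]
    rw [hnorm]
    linarith
  have hsub : IntegrableOn (fun t => f t - f b) (Ioc a b) :=
    integrableOn_Ioc_of_intervalIntegral_norm_bounded_left
      (fun n => ((hint n).sub intervalIntegrable_const).1) hu_lim hbound
  simpa [Pi.add_def] using hsub.add (integrableOn_const (C := f b) (by simp))

end Antitone

section Dilation

variable {f : ℝ → ℝ} {r c a b d : ℝ}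

theorem mul_intervalIntegral_le_of_mul_le_comp_mul (hr : 0 < r) (hbd : b ≤ d)
    (hint : IntervalIntegrable f volume b d)
    (hint' : IntervalIntegrable f volume (r * b) (r * d))
    (hdil : ∀ t ∈ Icc b d, c * f t ≤ f (r * t)) :
    r * c * ∫ t in b..d, f t ≤ ∫ t in r * b..r * d, f t := by
  have hint_comp : IntervalIntegrable (fun t => f (r * t)) volume b d := by
    simpa [hr.ne'] using hint'.comp_mul_left (c := r)
  calc r * c * ∫ t in b..d, f t = r * ∫ t in b..d, c * f t := by
        rw [intervalIntegral.integral_const_mul, mul_assoc]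
    _ ≤ r * ∫ t in b..d, f (r * t) := by
        gcongr
        exact intervalIntegral.integral_mono_on hbd (hint.const_mul c) hint_comp hdil
    _ = ∫ t in r * b..r * d, f t := intervalIntegral.mul_integral_comp_mul_left r

theorem sub_one_mul_intervalIntegral_le_of_mul_le_comp_mul (hr : 1 ≤ r) (hc : 0 ≤ c)
    (hb : 0 ≤ b) (hbd : b ≤ d) (hf : AntitoneOn f (Icc b (r * d)))
    (hdil : ∀ t ∈ Icc b d, c * f t ≤ f (r * t)) :
    (r * c - 1) * ∫ t in b..r * d, f t ≤ (r - 1) * ((r * d - b) * f (r * d)) := by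
  have hr₀ : 0 < r := one_pos.trans_le hr
  have hd : 0 ≤ d := hb.trans hbd
  have hb_rb : b ≤ r * b := le_mul_of_one_le_left hb hr
  have hd_rd : d ≤ r * d := le_mul_of_one_le_left hd hr
  have hrb_rd : r * b ≤ r * d := by gcongr
  have hf_d := hf.mono (Icc_subset_Icc_left hbd)
  have hf_b := hf.mono (Icc_subset_Icc_right hrb_rd)
  have hint_bd := intervalIntegrable_of_antitoneOn_Icc hbd (hf.mono (Icc_subset_Icc_right hd_rd))
  have hint_d := intervalIntegrable_of_antitoneOn_Icc hd_rd hf_d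
  have hint_b := intervalIntegrable_of_antitoneOn_Icc hb_rb hf_b
  have hint_rb := intervalIntegrable_of_antitoneOn_Icc hrb_rd (hf.mono (Icc_subset_Icc_left hb_rb))
  have hscale := mul_intervalIntegral_le_of_mul_le_comp_mul hr₀ hbd hint_bd hint_rb hdil
  have hsplit_d := intervalIntegral.integral_add_adjacent_intervals hint_bd hint_d
  have hsplit_rb := intervalIntegral.integral_add_adjacent_intervals hint_b hint_rb
  have hupper : r * c * ∫ t in d..r * d, f t ≤ (r - 1) * (r * d * f (r * d)) := by
    calc r * c * ∫ t in d..r * d, f t ≤ r * c * ((r * d - d) * f d) := by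
          gcongr
          exact intervalIntegral_le_sub_mul_left_of_antitoneOn hd_rd hf_d
      _ = (r - 1) * (r * d * (c * f d)) := by ring
      _ ≤ (r - 1) * (r * d * f (r * d)) := by
          have := hdil d (right_mem_Icc.2 hbd)
          have := sub_nonneg.2 hr
          gcongr
  have hlower : (r - 1) * (b * f (r * d)) ≤ ∫ t in b..r * b, f t := by
    calc (r - 1) * (b * f (r * d)) = (r * b - b) * f (r * d) := by ring
      _ ≤ (r * b - b) * f (r * b) :=
          mul_le_mul_of_nonneg_left
            (hf ⟨hb_rb, hrb_rd⟩ ⟨hbd.trans hd_rd, le_rfl⟩ hrb_rd) (sub_nonneg.2 hb_rb)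
      _ ≤ ∫ t in b..r * b, f t := sub_mul_right_le_intervalIntegral_of_antitoneOn hb_rb hf_b
  linear_combination hscale + hupper + hlower - r * c * hsplit_d + hsplit_rb

section Limit

variable (hr : 1 < r) (hf : AntitoneOn f (Ioi 0)) (hdil : ∀ t, 0 < t → c * f t ≤ f (r * t))
  (ha : 0 < a)
include hr hf hdil ha

theorem eventually_intervalIntegral_le_of_mul_le_comp_mul (hrc : 1 < r * c) :
    ∀ᶠ x in 𝓝[>] 0, ∫ t in x..a, f t ≤ (r - 1) / (r * c - 1) * ((a - x) * f a) := by
  have hr₀ : 0 < r := one_pos.trans hr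
  have hc : 0 ≤ c := (pos_of_mul_pos_right (one_pos.trans hrc) hr₀.le).le
  filter_upwards [Ioc_mem_nhdsGT (div_pos ha hr₀)] with x hx
  have hbound := sub_one_mul_intervalIntegral_le_of_mul_le_comp_mul hr.le hc hx.1.le hx.2
    (hf.mono fun t ht => hx.1.trans_le ht.1) fun t ht => hdil t (hx.1.trans_le ht.1)
  rw [mul_div_cancel₀ a hr₀.ne'] at hbound
  rwa [div_mul_eq_mul_div, le_div_iff₀' (sub_pos.2 hrc)]

theorem integrableOn_Ioc_and_integral_le_of_mul_le_comp_mul (hrc : 1 < r * c) :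
    IntegrableOn f (Ioc 0 a) ∧
      ∫ t in Ioc 0 a, f t ≤ (r - 1) / (r * c - 1) * (a * f a) := by
  have hle := eventually_intervalIntegral_le_of_mul_le_comp_mul hr hf hdil ha hrc
  have hbound_lim : Tendsto (fun x => (r - 1) / (r * c - 1) * ((a - x) * f a)) (𝓝[>] 0)
      (𝓝 ((r - 1) / (r * c - 1) * (a * f a))) :=
    (Continuous.tendsto' (by fun_prop) 0 _ (by rw [sub_zero])).mono_left nhdsWithin_le_nhds
  have hint : IntegrableOn f (Ioc 0 a) :=
    integrableOn_Ioc_of_antitoneOn_of_isBoundedUnder ha (hf.mono Ioc_subset_Ioi_self)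
      (hbound_lim.isBoundedUnder_le.mono_le hle)
  have hint_lim : Tendsto (fun x => ∫ t in x..a, f t) (𝓝[>] 0) (𝓝 (∫ t in 0..a, f t)) := by
    have hcont : ContinuousOn (fun x => ∫ t in x..a, f t) (Icc 0 a) := by
      rw [← uIcc_of_le ha.le]
      apply intervalIntegral.continuousOn_primitive_interval_left
      rwa [uIcc_of_le ha.le, integrableOn_Icc_iff_integrableOn_Ioc]
    exact ((hcont 0 (left_mem_Icc.2 ha.le)).mono Ioc_subset_Icc_self).tendsto.mono_left
      (nhdsWithin_Ioc_eq_nhdsGT ha).ge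
  rw [← intervalIntegral.integral_of_le ha.le]
  exact ⟨hint, le_of_tendsto_of_tendsto hint_lim hbound_lim hle⟩

end Limit

end Dilation

theorem statement13_general {f : ℝ → ℝ} {r ε a : ℝ} (hr : 1 < r) (hε : 0 < ε)
    (hf : AntitoneOn f (Ioi 0)) (hdil : ∀ t, 0 < t → r ^ (-1 + ε) * f t ≤ f (r * t))
    (ha : 0 < a) :
    IntegrableOn f (Ioo 0 a) ∧
      ∫ t in Ioo 0 a, f t ≤ (r - 1) / (r ^ ε - 1) * (a * f a) := by
  have hpow : r * r ^ (-1 + ε) = r ^ ε := by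
    rw [← Real.rpow_one_add' (by linarith) (by linarith)]
    ring_nf
  have hrc : 1 < r * r ^ (-1 + ε) := hpow ▸ Real.one_lt_rpow hr hε
  rw [← integrableOn_Ioc_iff_integrableOn_Ioo, ← integral_Ioc_eq_integral_Ioo, ← hpow]
  exact integrableOn_Ioc_and_integral_le_of_mul_le_comp_mul hr hf hdil ha hrc

/-- Proposition 7.1(ii): if `f : (0,∞) → [0,∞)` is decreasing and satisfies
`f(2τ) ≥ 2^{−1+ε} f(τ)` for all `τ > 0`, then there is `C = C(ε)` with
`∫_0^a f(τ) dτ ≤ C a f(a)` for all `0 < a < ∞`. -/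
theorem statement13 (ε : ℝ) (hε : 0 < ε) :
    ∃ C : ℝ, ∀ f : ℝ → ℝ,
      (∀ τ : ℝ, 0 < τ → 0 ≤ f τ) →
      (∀ s t : ℝ, 0 < s → s ≤ t → f t ≤ f s) →
      (∀ τ : ℝ, 0 < τ → 2 ^ (-1 + ε : ℝ) * f τ ≤ f (2 * τ)) →
      ∀ a : ℝ, 0 < a → (∫ τ in Set.Ioo 0 a, f τ) ≤ C * (a * f a) :=
  ⟨(2 - 1) / (2 ^ ε - 1), fun _ _ hanti hdouble _ ha =>
    (statement13_general one_lt_two hε (fun s hs t _ hst => hanti s t hs hst) hdouble ha).2⟩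
end

section
/- Fix Q, ε, ν > 0, N ≥ 0 and 0 ≤ a < ∞. Suppose f : [0,∞) → [0,∞) is either (a) increasing with f(2τ) ≤ 2^Q f(τ) for all τ ≥ 0, or (b) decreasing with f(2τ) ≥ 2^{−1+Q} f(τ) for all τ ≥ 0. Then ∫_a^∞ f(τ) τ^N e^{−ε τ^ν} dτ ≤ C f(1), where the constant C depends only on Q, ε, ν and N, and is independent of f and a. -/
open MeasureTheory

/-!
Doubling exponents may be increased, so they can be assumed nonnegative. Iterating the doubling
inequality along the powers of `2` bounds an increasing `f τ` by `1 + (2 * τ) ^ q` times `f 1`,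
where `q = max 0 Q`. The substitution `τ ↦ τ⁻¹` turns the decreasing case into the increasing one
with exponent `p = max 0 (1 - Q)`, and so bounds `f τ` by `1 + (2 / τ) ^ p` times `f 1`. Both
majorants are integrable against `τ ^ N * exp (-ε * τ ^ ν)` on `(0, ∞)`; for the second one this
is the condition `N - p > -1` at the origin.
-/

section DoublingGrowth

variable {b p s t : ℝ} {f : ℝ → ℝ}

lemma le_rpow_mul_of_monotoneOn_of_doubling (hb : 1 < b) (hp : 0 ≤ p)
    (hmono : MonotoneOn f (Set.Ioi 0)) (hdbl : ∀ τ, 0 < τ → f (b * τ) ≤ b ^ p * f τ)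
    (hs : 0 < s) (hst : s ≤ t) (hfs : 0 ≤ f s) :
    f t ≤ (b * (t / s)) ^ p * f s := by
  have hb₀ : 0 < b := one_pos.trans hb
  have hiter (n : ℕ) : f (b ^ n * s) ≤ (b ^ n) ^ p * f s := by
    rw [← Real.rpow_pow_comm hb₀.le]
    simpa using le_geom (u := fun k ↦ f (b ^ k * s)) (by positivity) n fun k _ ↦ by
      simpa only [pow_succ', mul_assoc] using hdbl (b ^ k * s) (by positivity)
  obtain ⟨n, hn, hn'⟩ := exists_nat_pow_near ((one_le_div hs).2 hst) hb
  calc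
    f t ≤ f (b ^ (n + 1) * s) :=
      hmono (hs.trans_le hst) (Set.mem_Ioi.2 (by positivity)) ((div_le_iff₀ hs).1 hn'.le)
    _ ≤ (b ^ (n + 1)) ^ p * f s := hiter (n + 1)
    _ ≤ (b * (t / s)) ^ p * f s := by rw [pow_succ']; gcongr

lemma le_one_add_rpow_mul_of_monotoneOn_of_doubling (hb : 1 < b) (hp : 0 ≤ p)
    (hmono : MonotoneOn f (Set.Ioi 0)) (hdbl : ∀ τ, 0 < τ → f (b * τ) ≤ b ^ p * f τ)
    (hs : 0 < s) (ht : 0 < t) (hfs : 0 ≤ f s) :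
    f t ≤ (1 + (b * (t / s)) ^ p) * f s := by
  have : 0 < b := one_pos.trans hb
  rcases le_total t s with hts | hst
  · exact (hmono ht hs hts).trans
      (le_mul_of_one_le_left hfs (le_add_of_nonneg_right (by positivity)))
  · exact (le_rpow_mul_of_monotoneOn_of_doubling hb hp hmono hdbl hs hst hfs).trans
      (mul_le_mul_of_nonneg_right (le_add_of_nonneg_left zero_le_one) hfs)

lemma le_one_add_rpow_mul_of_antitoneOn_of_doubling (hb : 1 < b) (hp : 0 ≤ p)
    (hanti : AntitoneOn f (Set.Ioi 0)) (hdbl : ∀ τ, 0 < τ → f τ ≤ b ^ p * f (b * τ))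
    (hs : 0 < s) (ht : 0 < t) (hfs : 0 ≤ f s) :
    f t ≤ (1 + (b * (s / t)) ^ p) * f s := by
  have hb₀ : 0 < b := one_pos.trans hb
  have hmono_inv : MonotoneOn (fun x ↦ f x⁻¹) (Set.Ioi 0) := fun x hx y hy hxy ↦
    hanti (Set.mem_Ioi.2 (inv_pos.2 hy)) (Set.mem_Ioi.2 (inv_pos.2 hx)) (inv_anti₀ hx hxy)
  have hdbl_inv (x : ℝ) (hx : 0 < x) : f (b * x)⁻¹ ≤ b ^ p * f x⁻¹ := by
    simpa only [mul_inv, mul_inv_cancel_left₀ hb₀.ne'] using hdbl (b * x)⁻¹ (by positivity)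
  simpa only [inv_inv, inv_div_inv] using
    le_one_add_rpow_mul_of_monotoneOn_of_doubling hb hp hmono_inv hdbl_inv
      (inv_pos.2 hs) (inv_pos.2 ht) (by rwa [inv_inv])

end DoublingGrowth

lemma integrableOn_and_setIntegral_le_of_le {α : Type*} [MeasurableSpace α] {μ : Measure α}
    {s t : Set α} {f g : α → ℝ} (ht : MeasurableSet t) (hst : s ⊆ t)
    (hf : AEStronglyMeasurable f (μ.restrict t)) (hg : IntegrableOn g t μ)
    (hf₀ : ∀ x ∈ t, 0 ≤ f x) (hfg : ∀ x ∈ t, f x ≤ g x) :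
    IntegrableOn f s μ ∧ ∫ x in s, f x ∂μ ≤ ∫ x in t, g x ∂μ := by
  have hft : IntegrableOn f t μ := hg.mono' hf <| (ae_restrict_mem ht).mono fun x hx ↦ by
    simpa only [Real.norm_of_nonneg (hf₀ x hx)] using hfg x hx
  refine ⟨hft.mono_set hst, ?_⟩
  calc
    ∫ x in s, f x ∂μ ≤ ∫ x in t, f x ∂μ :=
      setIntegral_mono_set hft ((ae_restrict_mem ht).mono hf₀) hst.eventuallyLE
    _ ≤ ∫ x in t, g x ∂μ := setIntegral_mono_on hft hg ht hfg

section StretchedExponential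

variable {ε ν N r : ℝ}

lemma integrableOn_add_mul_rpow_mul_rpow_mul_exp (A B : ℝ) (hε : 0 < ε) (hν : 0 < ν)
    (hN : -1 < N) (hr : -1 < r + N) :
    IntegrableOn (fun τ ↦ (A + B * τ ^ r) * τ ^ N * Real.exp (-ε * τ ^ ν)) (Set.Ioi 0) := by
  refine IntegrableOn.congr_fun (((integrableOn_rpow_mul_exp_neg_mul_rpow hN hν hε).const_mul A).add
    ((integrableOn_rpow_mul_exp_neg_mul_rpow hr hν hε).const_mul B))
    (fun τ hτ ↦ ?_) measurableSet_Ioi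
  simp only [Pi.add_apply, Real.rpow_add hτ]
  ring

theorem exists_setIntegral_mul_rpow_mul_exp_le_of_le (A B : ℝ) (hε : 0 < ε) (hν : 0 < ν)
    (hN : -1 < N) (hr : -1 < r + N) :
    ∃ C : ℝ, ∀ (f : ℝ → ℝ) (c : ℝ), AEMeasurable f (volume.restrict (Set.Ioi 0)) →
      (∀ τ, 0 < τ → 0 ≤ f τ) → (∀ τ, 0 < τ → f τ ≤ (A + B * τ ^ r) * c) → ∀ a, 0 ≤ a →
        IntegrableOn (fun τ ↦ f τ * τ ^ N * Real.exp (-ε * τ ^ ν)) (Set.Ioi a) ∧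
          ∫ τ in Set.Ioi a, f τ * τ ^ N * Real.exp (-ε * τ ^ ν) ≤ C * c := by
  refine ⟨∫ τ in Set.Ioi 0, (A + B * τ ^ r) * τ ^ N * Real.exp (-ε * τ ^ ν),
    fun f c hfm hf₀ hfle a ha ↦ ?_⟩
  rw [← integral_mul_const]
  refine integrableOn_and_setIntegral_le_of_le measurableSet_Ioi (Set.Ioi_subset_Ioi ha)
    (by fun_prop)
    ((integrableOn_add_mul_rpow_mul_rpow_mul_exp A B hε hν hN hr).mul_const c) ?_ ?_
  · intro τ (hτ : 0 < τ)
    have := hf₀ τ hτ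
    positivity
  · intro τ (hτ : 0 < τ)
    calc
      f τ * τ ^ N * Real.exp (-ε * τ ^ ν)
          ≤ (A + B * τ ^ r) * c * τ ^ N * Real.exp (-ε * τ ^ ν) := by gcongr; exact hfle τ hτ
      _ = (A + B * τ ^ r) * τ ^ N * Real.exp (-ε * τ ^ ν) * c := by ring

theorem exists_setIntegral_mul_rpow_mul_exp_le_of_monotoneOn {b : ℝ} (hb : 1 < b) (p : ℝ)
    (hε : 0 < ε) (hν : 0 < ν) (hN : -1 < N) :
    ∃ C : ℝ, ∀ f : ℝ → ℝ, (∀ τ, 0 < τ → 0 ≤ f τ) → MonotoneOn f (Set.Ioi 0) →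
      (∀ τ, 0 < τ → f (b * τ) ≤ b ^ p * f τ) → ∀ a, 0 ≤ a →
        IntegrableOn (fun τ ↦ f τ * τ ^ N * Real.exp (-ε * τ ^ ν)) (Set.Ioi a) ∧
          ∫ τ in Set.Ioi a, f τ * τ ^ N * Real.exp (-ε * τ ^ ν) ≤ C * f 1 := by
  have hb₀ : 0 < b := one_pos.trans hb
  set q := max 0 p
  have hq : 0 ≤ q := le_max_left 0 p
  obtain ⟨C, hC⟩ := exists_setIntegral_mul_rpow_mul_exp_le_of_le 1 (b ^ q) hε hν hN
    (show -1 < q + N by linarith)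
  refine ⟨C, fun f hf hmono hdbl ↦
    hC f (f 1) (aemeasurable_restrict_of_monotoneOn measurableSet_Ioi hmono) hf fun τ hτ ↦ ?_⟩
  have hdbl_q (x : ℝ) (hx : 0 < x) : f (b * x) ≤ b ^ q * f x :=
    (hdbl x hx).trans <| mul_le_mul_of_nonneg_right
      (Real.rpow_le_rpow_of_exponent_le hb.le (le_max_right 0 p)) (hf x hx)
  simpa only [div_one, Real.mul_rpow hb₀.le hτ.le] using
    le_one_add_rpow_mul_of_monotoneOn_of_doubling hb hq hmono hdbl_q one_pos hτ (hf 1 one_pos)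

theorem exists_setIntegral_mul_rpow_mul_exp_le_of_antitoneOn {b p : ℝ} (hb : 1 < b)
    (hε : 0 < ε) (hν : 0 < ν) (hN : -1 < N) (hp : -1 < -p + N) :
    ∃ C : ℝ, ∀ f : ℝ → ℝ, (∀ τ, 0 < τ → 0 ≤ f τ) → AntitoneOn f (Set.Ioi 0) →
      (∀ τ, 0 < τ → f τ ≤ b ^ p * f (b * τ)) → ∀ a, 0 ≤ a →
        IntegrableOn (fun τ ↦ f τ * τ ^ N * Real.exp (-ε * τ ^ ν)) (Set.Ioi a) ∧
          ∫ τ in Set.Ioi a, f τ * τ ^ N * Real.exp (-ε * τ ^ ν) ≤ C * f 1 := by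
  have hb₀ : 0 < b := one_pos.trans hb
  set q := max 0 p
  have hq : 0 ≤ q := le_max_left 0 p
  have hqN : q < N + 1 := max_lt (by linarith) (by linarith)
  obtain ⟨C, hC⟩ := exists_setIntegral_mul_rpow_mul_exp_le_of_le 1 (b ^ q) hε hν hN
    (show -1 < -q + N by linarith)
  refine ⟨C, fun f hf hanti hdbl ↦
    hC f (f 1) (aemeasurable_restrict_of_antitoneOn measurableSet_Ioi hanti) hf fun τ hτ ↦ ?_⟩
  have hdbl_q (x : ℝ) (hx : 0 < x) : f x ≤ b ^ q * f (b * x) :=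
    (hdbl x hx).trans <| mul_le_mul_of_nonneg_right
      (Real.rpow_le_rpow_of_exponent_le hb.le (le_max_right 0 p)) (hf (b * x) (by positivity))
  simpa only [one_div, Real.mul_rpow hb₀.le (inv_nonneg.2 hτ.le), Real.inv_rpow hτ.le,
    ← Real.rpow_neg hτ.le] using
    le_one_add_rpow_mul_of_antitoneOn_of_doubling hb hq hanti hdbl_q one_pos hτ (hf 1 one_pos)

end StretchedExponential

theorem statement14_general (Q ε ν N : ℝ) (hε : 0 < ε) (hν : 0 < ν) (hN : -1 < N)
    (hQN : 0 < Q + N) :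
    ∃ C : ℝ, ∀ f : ℝ → ℝ, (∀ τ, 0 < τ → 0 ≤ f τ) →
      ((MonotoneOn f (Set.Ioi 0) ∧ ∀ τ, 0 < τ → f (2 * τ) ≤ 2 ^ Q * f τ) ∨
        (AntitoneOn f (Set.Ioi 0) ∧ ∀ τ, 0 < τ → 2 ^ (-1 + Q) * f τ ≤ f (2 * τ))) →
      ∀ a, 0 ≤ a →
        IntegrableOn (fun τ ↦ f τ * τ ^ N * Real.exp (-ε * τ ^ ν)) (Set.Ioi a) ∧
          ∫ τ in Set.Ioi a, f τ * τ ^ N * Real.exp (-ε * τ ^ ν) ≤ C * f 1 := by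
  obtain ⟨C₁, hC₁⟩ :=
    exists_setIntegral_mul_rpow_mul_exp_le_of_monotoneOn one_lt_two Q hε hν hN
  obtain ⟨C₂, hC₂⟩ := exists_setIntegral_mul_rpow_mul_exp_le_of_antitoneOn one_lt_two hε hν hN
    (show -1 < -(1 - Q) + N by linarith)
  refine ⟨max C₁ C₂, fun f hf h a ha ↦ ?_⟩
  have hf₁ : 0 ≤ f 1 := hf 1 one_pos
  rcases h with ⟨hmono, hdbl⟩ | ⟨hanti, hdbl⟩
  · exact (hC₁ f hf hmono hdbl a ha).imp_right fun h ↦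
      h.trans (mul_le_mul_of_nonneg_right (le_max_left C₁ C₂) hf₁)
  · have hdbl' (τ : ℝ) (hτ : 0 < τ) : f τ ≤ 2 ^ (1 - Q) * f (2 * τ) := by
      rw [← inv_mul_le_iff₀ (by positivity), ← Real.rpow_neg zero_le_two, neg_sub,
        sub_eq_neg_add]
      exact hdbl τ hτ
    exact (hC₂ f hf hanti hdbl' a ha).imp_right fun h ↦
      h.trans (mul_le_mul_of_nonneg_right (le_max_right C₁ C₂) hf₁)

/-- Proposition 7.2: fix `Q, ε, ν > 0`, `N ≥ 0` and `0 ≤ a < ∞`. If `f : [0,∞) → [0,∞)`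
is either (a) increasing with `f(2τ) ≤ 2^Q f(τ)`, or (b) decreasing with
`f(2τ) ≥ 2^{−1+Q} f(τ)`, then `∫_a^∞ f(τ) τ^N e^{−ε τ^ν} dτ ≤ C f(1)` where `C`
depends only on `Q, ε, ν, N` (not on `f` or `a`). -/
theorem statement14 (Q ε ν N : ℝ) (hQ : 0 < Q) (hε : 0 < ε) (hν : 0 < ν)
    (hN : 0 ≤ N) :
    ∃ C : ℝ, ∀ f : ℝ → ℝ,
      (∀ τ : ℝ, 0 ≤ τ → 0 ≤ f τ) →
      (((∀ s t : ℝ, 0 ≤ s → s ≤ t → f s ≤ f t) ∧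
          ∀ τ : ℝ, 0 ≤ τ → f (2 * τ) ≤ 2 ^ Q * f τ) ∨
        ((∀ s t : ℝ, 0 ≤ s → s ≤ t → f t ≤ f s) ∧
          ∀ τ : ℝ, 0 ≤ τ → 2 ^ (-1 + Q : ℝ) * f τ ≤ f (2 * τ))) →
      ∀ a : ℝ, 0 ≤ a →
        (∫ τ in Set.Ioi a, f τ * τ ^ N * Real.exp (-ε * τ ^ ν)) ≤ C * f 1 := by
  obtain ⟨C, hC⟩ := statement14_general Q ε ν N hε hν (by linarith) (by linarith)
  refine ⟨C, fun f hf h a ha ↦ (hC f (fun τ hτ ↦ hf τ hτ.le) (h.imp ?_ ?_) a ha).2⟩ <;>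
    exact fun ⟨hord, hdbl⟩ ↦
      ⟨fun s hs t _ hst ↦ hord s t (le_of_lt hs) hst, fun τ hτ ↦ hdbl τ hτ.le⟩
end
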